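/- For binary images P and G on the same h×w grid and any real ε with 0 < ε < 1/4, if C is a regular connected component of FP, then the closure of C is homeomorphic either to the closed unit disk {x ∈ ℝ² : ‖x‖₂ ≤ 1} or to the closed annulus {x ∈ ℝ² : 1 ≤ ‖x‖₂ ≤ 2}. -/

import Mathlib

open Set Metric

noncomputable section

/-- The plane modeled as `Fin 2 → ℝ` with the Pi (sup) norm. -/
abbrev Plane : Type := Fin 2 → ℝ

/-- The Euclidean plane (for Euclidean-norm disks and annuli). -/
abbrev EPlane : Type := EuclideanSpace ℝ (Fin 2)

/-- The closed unit pixel `[i-1,i] × [j-1,j]` for a pixel index `(i,j)`. -/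
def pixel (p : ℕ × ℕ) : Set Plane :=
  {x | x 0 ∈ Set.Icc ((p.1 : ℝ) - 1) (p.1 : ℝ) ∧ x 1 ∈ Set.Icc ((p.2 : ℝ) - 1) (p.2 : ℝ)}

/-- A binary image `S` lies on the `h × w` grid `{1,…,h} × {1,…,w}`. -/
def OnGrid (S : Set (ℕ × ℕ)) (h w : ℕ) : Prop :=
  S ⊆ Set.Icc 1 h ×ˢ Set.Icc 1 w

/-- The foreground `F(S)` of a binary image. -/
def fg (S : Set (ℕ × ℕ)) : Set Plane := ⋃ p ∈ S, pixel p

/-- Closed `ε`-thickening `D_ε(X)` with respect to the sup norm. -/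
def thick (ε : ℝ) (X : Set Plane) : Set Plane := {y | ∃ x ∈ X, ‖x - y‖ ≤ ε}

/-- `C` is a connected component of `A` (as a subset of the plane). -/
def IsCompOf (C A : Set Plane) : Prop := ∃ x ∈ A, C = connectedComponentIn A x

/-- Two subsets share a boundary edge if their closures intersect in an infinite set. -/
def SharesEdge (C D : Set Plane) : Prop := (closure C ∩ closure D).Infinite

/-- `X` strongly deformation retracts onto `A`. -/
def SDR (X A : Set Plane) : Prop :=
  ∃ H : C(↥X × unitInterval, ↥X),
    (∀ x, H (x, 0) = x) ∧ (∀ x, ((H (x, 1) : Plane)) ∈ A) ∧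
    (∀ a : ↥X, (a : Plane) ∈ A → ∀ t, H (a, t) = a)

def TPset (P G : Set (ℕ × ℕ)) (ε : ℝ) : Set Plane := thick ε (fg P) ∩ thick (2 * ε) (fg G)
def TNset (P G : Set (ℕ × ℕ)) (ε : ℝ) : Set Plane := (thick ε (fg P))ᶜ ∩ (thick (2 * ε) (fg G))ᶜ
def FPset (P G : Set (ℕ × ℕ)) (ε : ℝ) : Set Plane := thick ε (fg P) ∩ (thick (2 * ε) (fg G))ᶜ
def FNset (P G : Set (ℕ × ℕ)) (ε : ℝ) : Set Plane := (thick ε (fg P))ᶜ ∩ thick (2 * ε) (fg G)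

/-- A component `C` (of `FP` or `FN`) is regular: exactly one component of `TP` and exactly
one component of `TN` share a boundary edge with it. -/
def RegularComp (P G : Set (ℕ × ℕ)) (ε : ℝ) (C : Set Plane) : Prop :=
  (∃! T : Set Plane, IsCompOf T (TPset P G ε) ∧ SharesEdge T C) ∧
  (∃! T : Set Plane, IsCompOf T (TNset P G ε) ∧ SharesEdge T C)

/-- The zero-loss hypothesis: every component of `FP` and every component of `FN` is regular. -/
def ZeroLoss (P G : Set (ℕ × ℕ)) (ε : ℝ) : Prop :=
  (∀ C : Set Plane, IsCompOf C (FPset P G ε) → RegularComp P G ε C) ∧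
  (∀ C : Set Plane, IsCompOf C (FNset P G ε) → RegularComp P G ε C)

/-! ### Piecewise linear shears of the plane -/

/-- tent function supported on `[p, r]` with peak `1` at `q` -/
def tent (p r q x : ℝ) : ℝ := max 0 (min ((x - p) / (q - p)) ((r - x) / (r - q)))

/-- piecewise linear map moving `q` to `q'` and fixing everything outside `[p, r]` -/
def plm (p r q q' x : ℝ) : ℝ := x + (q' - q) * tent p r q x

lemma plm_out {p r q q' x : ℝ} (h1 : p < q) (h2 : q < r) (hx : x ≤ p ∨ r ≤ x) :
    plm p r q q' x = x := by
  have : tent p r q x = 0 := by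
    unfold tent
    apply max_eq_left
    rcases hx with hx | hx
    · exact (min_le_left _ _).trans (div_nonpos_of_nonpos_of_nonneg (by linarith) (by linarith))
    · exact (min_le_right _ _).trans (div_nonpos_of_nonpos_of_nonneg (by linarith) (by linarith))
  simp [plm, this]

lemma plm_left {p r q q' x : ℝ} (h1 : p < q) (h2 : q < r) (hx : p ≤ x) (hx' : x ≤ q) :
    plm p r q q' x = p + (x - p) * ((q' - p) / (q - p)) := by
  have : tent p r q x = (x - p) / (q - p) := by
    unfold tent
    have a1 : (x - p) / (q - p) ≤ 1 := by rw [div_le_one (by linarith)]; linarith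
    have a2 : 1 ≤ (r - x) / (r - q) := by rw [one_le_div (by linarith)]; linarith
    rw [min_eq_left (a1.trans a2)]
    exact max_eq_right (div_nonneg (by linarith) (by linarith))
  have h0 : q - p ≠ 0 := by linarith
  rw [plm, this]
  field_simp
  ring

lemma plm_right {p r q q' x : ℝ} (h1 : p < q) (h2 : q < r) (hx : q ≤ x) (hx' : x ≤ r) :
    plm p r q q' x = r - (r - x) * ((r - q') / (r - q)) := by
  have : tent p r q x = (r - x) / (r - q) := by
    unfold tent
    have a1 : 1 ≤ (x - p) / (q - p) := by rw [one_le_div (by linarith)]; linarith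
    have a2 : (r - x) / (r - q) ≤ 1 := by rw [div_le_one (by linarith)]; linarith
    rw [min_eq_right (a2.trans a1)]
    exact max_eq_right (div_nonneg (by linarith) (by linarith))
  have h0 : r - q ≠ 0 := by linarith
  rw [plm, this]
  field_simp
  ring

lemma plm_inv {p r q q' : ℝ} (h1 : p < q) (h2 : q < r) (h1' : p < q') (h2' : q' < r) (x : ℝ) :
    plm p r q' q (plm p r q q' x) = x := by
  rcases le_total x p with hx | hx
  · rw [plm_out h1 h2 (Or.inl hx), plm_out h1' h2' (Or.inl hx)]
  rcases le_total r x with hx2 | hx2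
  · rw [plm_out h1 h2 (Or.inr hx2), plm_out h1' h2' (Or.inr hx2)]
  rcases le_total x q with hx3 | hx3
  · have e := plm_left (q' := q') h1 h2 hx hx3
    have hq : 0 < q - p := by linarith
    have hq' : 0 < q' - p := by linarith
    have b1 : p ≤ plm p r q q' x := by
      rw [e]
      have : 0 ≤ (x - p) * ((q' - p) / (q - p)) :=
        mul_nonneg (by linarith) (div_nonneg hq'.le hq.le)
      linarith
    have b2 : plm p r q q' x ≤ q' := by
      rw [e, mul_div_assoc', ← le_sub_iff_add_le', div_le_iff₀ hq]
      nlinarith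
    rw [plm_left h1' h2' b1 b2, e]
    field_simp
    ring
  · have e := plm_right (q' := q') h1 h2 hx3 hx2
    have hq : 0 < r - q := by linarith
    have hq' : 0 < r - q' := by linarith
    have b1 : plm p r q q' x ≤ r := by
      rw [e]
      have : 0 ≤ (r - x) * ((r - q') / (r - q)) :=
        mul_nonneg (by linarith) (div_nonneg hq'.le hq.le)
      linarith
    have b2 : q' ≤ plm p r q q' x := by
      have : (r - x) * ((r - q') / (r - q)) ≤ r - q' := by
        rw [mul_div_assoc', div_le_iff₀ hq]
        nlinarith
      rw [e]; linarith
    rw [plm_right h1' h2' b2 b1, e]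
    field_simp
    ring

lemma plm_continuous {α : Type*} [TopologicalSpace α] {p r : ℝ} {q q' x : α → ℝ}
    (hq : Continuous q) (hq' : Continuous q') (hx : Continuous x)
    (h1 : ∀ a, p < q a) (h2 : ∀ a, q a < r) :
    Continuous fun a => plm p r (q a) (q' a) (x a) := by
  unfold plm tent
  refine hx.add ((hq'.sub hq).mul (continuous_const.max (Continuous.min ?_ ?_)))
  · exact (hx.sub continuous_const).div (hq.sub continuous_const)
      (fun a => by have := h1 a; linarith)
  · exact (continuous_const.sub hx).div (continuous_const.sub hq)
      (fun a => by have := h2 a; linarith)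

lemma plm_strictMono {p r q q' : ℝ} (h1 : p < q) (h2 : q < r) (h1' : p < q') (h2' : q' < r) :
    StrictMono (plm p r q q') := by
  have hc : Continuous (plm p r q q') :=
    plm_continuous continuous_const continuous_const continuous_id (fun _ => h1) (fun _ => h2)
  have hi : Function.Injective (plm p r q q') := fun x y hxy => by
    rw [← plm_inv h1 h2 h1' h2' x, hxy, plm_inv h1 h2 h1' h2' y]
  rcases hc.strictMono_of_inj hi with h | h
  · exact h
  · have := h (h1.trans h2)
    rw [plm_out h1 h2 (Or.inr le_rfl), plm_out h1 h2 (Or.inl le_rfl)] at this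
    linarith

lemma plm_peak {p r q q' : ℝ} (h1 : p < q) (h2 : q < r) : plm p r q q' q = q' := by
  have h0 : q - p ≠ 0 := by linarith
  rw [plm_left h1 h2 h1.le le_rfl]
  field_simp
  ring

lemma plm_self {p r q x : ℝ} : plm p r q q x = x := by simp [plm]

/-- The one-dimensional homeomorphism. -/
lemma exists_plm_homeo {p r q q' : ℝ} (h1 : p < q) (h2 : q < r) (h1' : p < q') (h2' : q' < r) :
    ∃ e : ℝ ≃ₜ ℝ, StrictMono e ∧ (∀ x, x ≤ p ∨ r ≤ x → e x = x) ∧ e q = q' :=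
  ⟨{ toFun := plm p r q q'
     invFun := plm p r q' q
     left_inv := plm_inv h1 h2 h1' h2'
     right_inv := plm_inv h1' h2' h1 h2
     continuous_toFun :=
       plm_continuous continuous_const continuous_const continuous_id (fun _ => h1) (fun _ => h2)
     continuous_invFun :=
       plm_continuous continuous_const continuous_const continuous_id
         (fun _ => h1') (fun _ => h2') },
    plm_strictMono h1 h2 h1' h2', fun _ hx => plm_out h1 h2 hx, plm_peak h1 h2⟩

/-- Horizontal shear. -/
lemma hshear (p r : ℝ) (q q' : ℝ → ℝ) (hq : Continuous q) (hq' : Continuous q')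
    (h1 : ∀ y, p < q y) (h2 : ∀ y, q y < r) (h1' : ∀ y, p < q' y) (h2' : ∀ y, q' y < r) :
    ∃ H : ℝ × ℝ ≃ₜ ℝ × ℝ, (∀ z, (H z).2 = z.2) ∧
      (∀ z : ℝ × ℝ, z.1 ≤ p ∨ r ≤ z.1 ∨ q z.2 = q' z.2 → H z = z) ∧
      (∀ z, (H z).1 ≤ q' z.2 ↔ z.1 ≤ q z.2) ∧ (∀ z, q' z.2 ≤ (H z).1 ↔ q z.2 ≤ z.1) ∧
      (∀ z, (H z).1 ≤ r ↔ z.1 ≤ r) ∧ (∀ z, p ≤ (H z).1 ↔ p ≤ z.1) := by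
  refine ⟨{ toFun := fun z => (plm p r (q z.2) (q' z.2) z.1, z.2)
            invFun := fun z => (plm p r (q' z.2) (q z.2) z.1, z.2)
            left_inv := fun z => Prod.ext (plm_inv (h1 _) (h2 _) (h1' _) (h2' _) _) rfl
            right_inv := fun z => Prod.ext (plm_inv (h1' _) (h2' _) (h1 _) (h2 _) _) rfl
            continuous_toFun := (plm_continuous (hq.comp continuous_snd) (hq'.comp continuous_snd)
              continuous_fst (fun _ => h1 _) (fun _ => h2 _)).prodMk continuous_snd
            continuous_invFun := (plm_continuous (hq'.comp continuous_snd) (hq.comp continuous_snd)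
              continuous_fst (fun _ => h1' _) (fun _ => h2' _)).prodMk continuous_snd },
            fun z => rfl, ?_, ?_, ?_, ?_, ?_⟩
  · intro z hz
    refine Prod.ext ?_ rfl
    change plm p r (q z.2) (q' z.2) z.1 = z.1
    rcases hz with hz | hz | hz
    · exact plm_out (h1 _) (h2 _) (Or.inl hz)
    · exact plm_out (h1 _) (h2 _) (Or.inr hz)
    · rw [hz]; exact plm_self
  · intro z
    change plm p r (q z.2) (q' z.2) z.1 ≤ q' z.2 ↔ _
    conv_lhs => rhs; rw [← plm_peak (q' := q' z.2) (h1 z.2) (h2 z.2)]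
    exact (plm_strictMono (h1 _) (h2 _) (h1' _) (h2' _)).le_iff_le
  · intro z
    change q' z.2 ≤ plm p r (q z.2) (q' z.2) z.1 ↔ _
    conv_lhs => lhs; rw [← plm_peak (q' := q' z.2) (h1 z.2) (h2 z.2)]
    exact (plm_strictMono (h1 _) (h2 _) (h1' _) (h2' _)).le_iff_le
  · intro z
    change plm p r (q z.2) (q' z.2) z.1 ≤ r ↔ _
    conv_lhs => rhs; rw [← plm_out (q' := q' z.2) (x := r) (h1 z.2) (h2 z.2) (Or.inr le_rfl)]
    exact (plm_strictMono (h1 _) (h2 _) (h1' _) (h2' _)).le_iff_le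
  · intro z
    change p ≤ plm p r (q z.2) (q' z.2) z.1 ↔ _
    conv_lhs => lhs; rw [← plm_out (q' := q' z.2) (x := p) (h1 z.2) (h2 z.2) (Or.inl le_rfl)]
    exact (plm_strictMono (h1 _) (h2 _) (h1' _) (h2' _)).le_iff_le

/-- Vertical shear. -/
lemma vshear (p r : ℝ) (q q' : ℝ → ℝ) (hq : Continuous q) (hq' : Continuous q')
    (h1 : ∀ y, p < q y) (h2 : ∀ y, q y < r) (h1' : ∀ y, p < q' y) (h2' : ∀ y, q' y < r) :
    ∃ H : ℝ × ℝ ≃ₜ ℝ × ℝ, (∀ z, (H z).1 = z.1) ∧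
      (∀ z : ℝ × ℝ, z.2 ≤ p ∨ r ≤ z.2 ∨ q z.1 = q' z.1 → H z = z) ∧
      (∀ z, (H z).2 ≤ q' z.1 ↔ z.2 ≤ q z.1) ∧ (∀ z, q' z.1 ≤ (H z).2 ↔ q z.1 ≤ z.2) ∧
      (∀ z, (H z).2 ≤ r ↔ z.2 ≤ r) ∧ (∀ z, p ≤ (H z).2 ↔ p ≤ z.2) := by
  obtain ⟨H, a1, a2, a3, a4, a5, a6⟩ := hshear p r q q' hq hq' h1 h2 h1' h2'
  refine ⟨((Homeomorph.prodComm ℝ ℝ).trans H).trans (Homeomorph.prodComm ℝ ℝ),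
    fun z => a1 z.swap, fun z hz => ?_, fun z => a3 z.swap, fun z => a4 z.swap,
    fun z => a5 z.swap, fun z => a6 z.swap⟩
  have := a2 z.swap hz
  change (H z.swap).swap = z
  rw [this]; simp

/-- closed box -/
def box (a b c d : ℝ) : Set (ℝ × ℝ) := {z | a ≤ z.1 ∧ z.1 ≤ b ∧ c ≤ z.2 ∧ z.2 ≤ d}

/-- half strip to the left of `a` -/
def lstrip (a e f : ℝ) : Set (ℝ × ℝ) := {z | z.1 ≤ a ∧ e ≤ z.2 ∧ z.2 ≤ f}

/-- half strip to the right of `b` -/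
def rstrip (b e f : ℝ) : Set (ℝ × ℝ) := {z | b ≤ z.1 ∧ e ≤ z.2 ∧ z.2 ≤ f}

/-- The elementary move: retract the box `[a,b]×[c,d]` into the strip on its left. -/
lemma move_left {a b c d e f δ : ℝ} (hab : a < b) (hδ : 0 < δ) (hcd : c < d) (hef : e < f)
    (hcf : c < f) (hed : e < d) :
    ∃ Φ : ℝ × ℝ ≃ₜ ℝ × ℝ, (∀ z, z ∉ box (a - δ) (b + δ) (c - δ) (d + δ) → Φ z = z) ∧
      ∀ z, Φ z ∈ lstrip a e f ↔ z ∈ box a b c d ∪ lstrip a e f := by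
  obtain ⟨c', hc'⟩ : ∃ c', c' = max c e := ⟨_, rfl⟩
  obtain ⟨d', hd'⟩ : ∃ d', d' = min d f := ⟨_, rfl⟩
  have hcd' : c' < d' := by
    rw [hc', hd']; exact max_lt (lt_min hcd hcf) (lt_min hed hef)
  have c1 : c ≤ c' := hc' ▸ le_max_left _ _
  have c2 : e ≤ c' := hc' ▸ le_max_right _ _
  have d1 : d' ≤ d := hd' ▸ min_le_left _ _
  have d2 : d' ≤ f := hd' ▸ min_le_right _ _
  obtain ⟨κ, hκ⟩ : ∃ κ, κ = (b - a) / (2 * (d - c)) := ⟨_, rfl⟩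
  have hκ0 : 0 < κ := by rw [hκ]; apply div_pos <;> linarith
  have hκ1 : κ * (d - c) = (b - a) / 2 := by
    rw [hκ]; have : d - c ≠ 0 := by linarith
    field_simp
  obtain ⟨M, hM⟩ : ∃ M, M = (d - c) / δ := ⟨_, rfl⟩
  have hM0 : 0 < M := by rw [hM]; apply div_pos <;> linarith
  have hM1 : M * δ = d - c := by rw [hM]; field_simp
  obtain ⟨τ, hτ⟩ : ∃ τ, τ = (d' - c') / (4 * (b - a)) := ⟨_, rfl⟩
  have hτ0 : 0 < τ := by rw [hτ]; apply div_pos <;> linarith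
  have hτ1 : τ * (b - a) = (d' - c') / 4 := by
    rw [hτ]; have : b - a ≠ 0 := by linarith
    field_simp
  -- the first shear
  obtain ⟨s, hs⟩ : ∃ s : ℝ → ℝ, s = fun y =>
    κ * max 0 (min (max (e - y) (y - f)) (M * min (y - (c - δ)) (d + δ - y))) := ⟨_, rfl⟩
  have hsc : Continuous s := by rw [hs]; fun_prop
  have hs0 : ∀ y, 0 ≤ s y := fun y => by
    rw [hs]; exact mul_nonneg hκ0.le (le_max_left _ _)
  have hsef : ∀ y, e ≤ y → y ≤ f → s y = 0 := fun y h1 h2 => by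
    have : max 0 (min (max (e - y) (y - f)) (M * min (y - (c - δ)) (d + δ - y))) = 0 :=
      max_eq_left ((min_le_left _ _).trans (max_le (by linarith) (by linarith)))
    simp only [hs, this, mul_zero]
  have hscd : ∀ y, c ≤ y → y ≤ d → s y = κ * max 0 (max (e - y) (y - f)) := fun y h1 h2 => by
    have : max (e - y) (y - f) ≤ M * min (y - (c - δ)) (d + δ - y) := by
      have h3 : M * δ ≤ M * min (y - (c - δ)) (d + δ - y) :=
        mul_le_mul_of_nonneg_left (le_min (by linarith) (by linarith)) hM0.le
      exact (max_le (by linarith) (by linarith)).trans h3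
    simp only [hs, min_eq_left this]
  have hsout : ∀ y, y ≤ c - δ ∨ d + δ ≤ y → s y = 0 := fun y h => by
    have h3 : min (y - (c - δ)) (d + δ - y) ≤ 0 := by
      rcases h with h | h
      · exact (min_le_left _ _).trans (by linarith)
      · exact (min_le_right _ _).trans (by linarith)
    have : max 0 (min (max (e - y) (y - f)) (M * min (y - (c - δ)) (d + δ - y))) = 0 :=
      max_eq_left ((min_le_right _ _).trans (mul_nonpos_of_nonneg_of_nonpos hM0.le h3))
    simp only [hs, this, mul_zero]
  have hslt : ∀ y, s y < b - a := fun y => by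
    have h3 : max 0 (min (max (e - y) (y - f)) (M * min (y - (c - δ)) (d + δ - y))) ≤ d - c := by
      apply max_le (by linarith)
      rcases le_total y d with h | h
      · rcases le_total c y with h' | h'
        · exact (min_le_left _ _).trans (max_le (by linarith) (by linarith))
        · refine (min_le_right _ _).trans ?_
          rw [← hM1]
          exact mul_le_mul_of_nonneg_left ((min_le_left _ _).trans (by linarith)) hM0.le
      · refine (min_le_right _ _).trans ?_
        rw [← hM1]
        exact mul_le_mul_of_nonneg_left ((min_le_right _ _).trans (by linarith)) hM0.le
    have h4 := mul_le_mul_of_nonneg_left h3 hκ0.le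
    have : s y ≤ κ * (d - c) := by rw [hs]; exact h4
    linarith
  obtain ⟨H1, A1, A2, A3, A4, A5, A6⟩ := hshear (a - δ) b (fun _ => a) (fun y => a + s y)
    continuous_const (continuous_const.add hsc) (fun _ => by linarith) (fun _ => hab)
    (fun y => by have := hs0 y; linarith) (fun y => by have := hslt y; linarith)
  -- the vertical shears
  obtain ⟨t, ht⟩ : ∃ t : ℝ → ℝ, t = fun x => max 0 (min (x - a) (b - a)) := ⟨_, rfl⟩
  have htc : Continuous t := by rw [ht]; fun_prop
  have ht0 : ∀ x, 0 ≤ t x := fun x => by rw [ht]; exact le_max_left _ _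
  have ht1 : ∀ x, t x ≤ b - a := fun x => by
    rw [ht]; exact max_le (by linarith) (min_le_right _ _)
  have hta : ∀ x, x ≤ a → t x = 0 := fun x hx => by
    rw [ht]; exact max_eq_left ((min_le_left _ _).trans (by linarith))
  have htab : ∀ x, a ≤ x → x ≤ b → t x = x - a := fun x h1 h2 => by
    simp only [ht]; rw [min_eq_left (by linarith), max_eq_right (by linarith)]
  obtain ⟨ρ, hρ⟩ : ∃ ρ : ℝ → ℝ, ρ = fun x => max 0 (min 1 ((b + δ - x) / δ)) := ⟨_, rfl⟩
  have hρc : Continuous ρ := by rw [hρ]; fun_prop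
  have hρ0 : ∀ x, 0 ≤ ρ x := fun x => by rw [hρ]; exact le_max_left _ _
  have hρ1 : ∀ x, ρ x ≤ 1 := fun x => by rw [hρ]; exact max_le (by linarith) (min_le_left _ _)
  have hρb : ∀ x, x ≤ b → ρ x = 1 := fun x hx => by
    have : 1 ≤ (b + δ - x) / δ := by rw [one_le_div hδ]; linarith
    simp only [hρ]; rw [min_eq_left this]; norm_num
  have hρout : ∀ x, b + δ ≤ x → ρ x = 0 := fun x hx => by
    have : (b + δ - x) / δ ≤ 0 := div_nonpos_of_nonpos_of_nonneg (by linarith) hδ.le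
    simp only [hρ]; exact max_eq_left ((min_le_right _ _).trans this)
  obtain ⟨m, hm⟩ : ∃ m, m = (c' + d') / 2 := ⟨_, rfl⟩
  obtain ⟨u, hu⟩ : ∃ u : ℝ → ℝ, u = fun x => min d (f + t x / κ) := ⟨_, rfl⟩
  obtain ⟨l, hl⟩ : ∃ l : ℝ → ℝ, l = fun x => max c (e - t x / κ) := ⟨_, rfl⟩
  have huc : Continuous u := by rw [hu]; fun_prop
  have hlc : Continuous l := by rw [hl]; fun_prop
  have htκ : ∀ x, 0 ≤ t x / κ := fun x => div_nonneg (ht0 x) hκ0.le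
  have hu1 : ∀ x, u x ≤ d := fun x => by rw [hu]; exact min_le_left _ _
  have hu2 : ∀ x, d' ≤ u x := fun x => by
    have := htκ x
    rw [hu]; exact le_min d1 (by linarith)
  have hl1 : ∀ x, c ≤ l x := fun x => by rw [hl]; exact le_max_left _ _
  have hl2 : ∀ x, l x ≤ c' := fun x => by
    have := htκ x
    rw [hl]; exact max_le c1 (by linarith)
  have hua : ∀ x, x ≤ a → u x = d' := fun x hx => by
    simp only [hu, hta x hx, zero_div, add_zero, hd']
  have hla : ∀ x, x ≤ a → l x = c' := fun x hx => by
    simp only [hl, hta x hx, zero_div, sub_zero, hc']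
  have hτt : ∀ x, 0 ≤ τ * t x := fun x => mul_nonneg hτ0.le (ht0 x)
  have hτt1 : ∀ x, τ * t x ≤ (d' - c') / 4 := fun x => by
    rw [← hτ1]; exact mul_le_mul_of_nonneg_left (ht1 x) hτ0.le
  obtain ⟨u', hu'⟩ : ∃ u' : ℝ → ℝ, u' = fun x => u x - ρ x * (u x - d' + τ * t x) := ⟨_, rfl⟩
  obtain ⟨l', hl'⟩ : ∃ l' : ℝ → ℝ, l' = fun x => l x + ρ x * (c' + τ * t x - l x) := ⟨_, rfl⟩
  have huc' : Continuous u' := by rw [hu']; fun_prop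
  have hlc' : Continuous l' := by rw [hl']; fun_prop
  have hu'1 : ∀ x, m < u' x := fun x => by
    have e1 := hρ0 x; have e2 := hρ1 x; have e3 := hu2 x; have e4 := hτt x; have e5 := hτt1 x
    have e6 : ρ x * (u x - d' + τ * t x) ≤ 1 * (u x - d' + τ * t x) :=
      mul_le_mul_of_nonneg_right e2 (by linarith)
    rw [hu', hm]; dsimp only; linarith
  have hu'2 : ∀ x, u' x ≤ u x := fun x => by
    have e1 := hρ0 x; have e3 := hu2 x; have e4 := hτt x
    have e6 : 0 ≤ ρ x * (u x - d' + τ * t x) := mul_nonneg e1 (by linarith)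
    rw [hu']; dsimp only; linarith
  have hl'1 : ∀ x, l' x < m := fun x => by
    have e1 := hρ0 x; have e2 := hρ1 x; have e3 := hl2 x; have e4 := hτt x; have e5 := hτt1 x
    have e6 : ρ x * (c' + τ * t x - l x) ≤ 1 * (c' + τ * t x - l x) :=
      mul_le_mul_of_nonneg_right e2 (by linarith)
    rw [hl', hm]; dsimp only; linarith
  have hl'2 : ∀ x, l x ≤ l' x := fun x => by
    have e1 := hρ0 x; have e3 := hl2 x; have e4 := hτt x
    have e6 : 0 ≤ ρ x * (c' + τ * t x - l x) := mul_nonneg e1 (by linarith)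
    rw [hl']; dsimp only; linarith
  have hu'a : ∀ x, x ≤ a → u x = u' x := fun x hx => by
    simp only [hu', hua x hx, hta x hx]; ring
  have hl'a : ∀ x, x ≤ a → l x = l' x := fun x hx => by
    simp only [hl', hla x hx, hta x hx]; ring
  have hu'b : ∀ x, b + δ ≤ x → u x = u' x := fun x hx => by
    simp only [hu', hρout x hx]; ring
  have hl'b : ∀ x, b + δ ≤ x → l x = l' x := fun x hx => by
    simp only [hl', hρout x hx]; ring
  have hu'ab : ∀ x, a ≤ x → x ≤ b → u' x = d' - τ * (x - a) := fun x h1 h2 => by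
    simp only [hu', hρb x h2, htab x h1 h2]; ring
  have hl'ab : ∀ x, a ≤ x → x ≤ b → l' x = c' + τ * (x - a) := fun x h1 h2 => by
    simp only [hl', hρb x h2, htab x h1 h2]; ring
  obtain ⟨H2, B1, B2, B3, B4, B5, B6⟩ := vshear m (d + δ) u u' huc huc'
    (fun x => by have := hu2 x; linarith) (fun x => by have := hu1 x; linarith)
    hu'1 (fun x => by have := hu1 x; have := hu'2 x; linarith)
  obtain ⟨H3, C1, C2, C3, C4, C5, C6⟩ := vshear (c - δ) m l l' hlc hlc'
    (fun x => by have := hl1 x; linarith) (fun x => by have := hl2 x; linarith)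
    (fun x => by have := hl1 x; have := hl'2 x; linarith) hl'1
  obtain ⟨q, hq⟩ : ∃ q : ℝ → ℝ, q = fun y =>
    a + max 0 (min (b - a) (min ((d' - y) / τ) ((y - c') / τ))) := ⟨_, rfl⟩
  have hqc : Continuous q := by rw [hq]; fun_prop
  have hqa : ∀ y, a ≤ q y := fun y => by
    have : 0 ≤ max 0 (min (b - a) (min ((d' - y) / τ) ((y - c') / τ))) := le_max_left _ _
    rw [hq]; dsimp only; linarith
  have hqb : ∀ y, q y ≤ b := fun y => by
    have : max 0 (min (b - a) (min ((d' - y) / τ) ((y - c') / τ))) ≤ b - a :=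
      max_le (by linarith) (min_le_left _ _)
    rw [hq]; dsimp only; linarith
  have hqout : ∀ y, y ≤ c' ∨ d' ≤ y → q y = a := fun y h => by
    have h3 : min ((d' - y) / τ) ((y - c') / τ) ≤ 0 := by
      rcases h with h | h
      · exact (min_le_right _ _).trans (div_nonpos_of_nonpos_of_nonneg (by linarith) hτ0.le)
      · exact (min_le_left _ _).trans (div_nonpos_of_nonpos_of_nonneg (by linarith) hτ0.le)
    have : max 0 (min (b - a) (min ((d' - y) / τ) ((y - c') / τ))) = 0 :=
      max_eq_left ((min_le_right _ _).trans h3)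
    simp only [hq, this, add_zero]
  have hqin : ∀ y, c' ≤ y → y ≤ d' → ∀ x, a ≤ x →
      (x ≤ q y ↔ x ≤ b ∧ c' + τ * (x - a) ≤ y ∧ y ≤ d' - τ * (x - a)) := fun y h1 h2 x hx => by
    have h3 : max 0 (min (b - a) (min ((d' - y) / τ) ((y - c') / τ))) =
        min (b - a) (min ((d' - y) / τ) ((y - c') / τ)) :=
      max_eq_right (le_min (by linarith)
        (le_min (div_nonneg (by linarith) hτ0.le) (div_nonneg (by linarith) hτ0.le)))
    simp only [hq, h3]
    rw [← sub_le_iff_le_add', le_min_iff, le_min_iff, le_div_iff₀ hτ0, le_div_iff₀ hτ0]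
    constructor
    · rintro ⟨g1, g2, g3⟩
      exact ⟨by linarith, by linarith, by linarith⟩
    · rintro ⟨g1, g2, g3⟩
      exact ⟨by linarith, by linarith, by linarith⟩
  obtain ⟨H4, D1, D2, D3, D4, D5, D6⟩ := hshear (a - δ) (b + δ) q (fun _ => a) hqc
    continuous_const (fun y => by have := hqa y; linarith) (fun y => by have := hqb y; linarith)
    (fun _ => by linarith) (fun _ => by linarith)
  refine ⟨((H1.trans H2).trans H3).trans H4, ?_, ?_⟩
  · intro z hz
    have hz' : z.1 ≤ a - δ ∨ b + δ ≤ z.1 ∨ z.2 ≤ c - δ ∨ d + δ ≤ z.2 := by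
      by_contra hcon
      push Not at hcon
      exact hz ⟨by linarith, by linarith, by linarith, by linarith⟩
    have e1 : H1 z = z := by
      apply A2
      rcases hz' with h | h | h | h
      · exact Or.inl h
      · exact Or.inr (Or.inl (by linarith))
      · exact Or.inr (Or.inr (by simp [hsout z.2 (Or.inl h)]))
      · exact Or.inr (Or.inr (by simp [hsout z.2 (Or.inr h)]))
    have e2 : H2 z = z := by
      apply B2
      rcases hz' with h | h | h | h
      · exact Or.inr (Or.inr (hu'a _ (by linarith)))
      · exact Or.inr (Or.inr (hu'b _ h))
      · exact Or.inl (by linarith)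
      · exact Or.inr (Or.inl h)
    have e3 : H3 z = z := by
      apply C2
      rcases hz' with h | h | h | h
      · exact Or.inr (Or.inr (hl'a _ (by linarith)))
      · exact Or.inr (Or.inr (hl'b _ h))
      · exact Or.inl h
      · exact Or.inr (Or.inl (by linarith))
    have e4 : H4 z = z := by
      apply D2
      rcases hz' with h | h | h | h
      · exact Or.inl h
      · exact Or.inr (Or.inl h)
      · exact Or.inr (Or.inr (hqout _ (Or.inl (by linarith))))
      · exact Or.inr (Or.inr (hqout _ (Or.inr (by linarith))))
    simp only [Homeomorph.trans_apply, e1, e2, e3, e4]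
  · -- the four equivalences
    have S1 : ∀ z : ℝ × ℝ, ((c ≤ (H1 z).2 ∧ (H1 z).2 ≤ d ∧ a + s (H1 z).2 ≤ (H1 z).1 ∧
        (H1 z).1 ≤ b) ∨ H1 z ∈ lstrip a e f) ↔ z ∈ box a b c d ∪ lstrip a e f := by
      intro z
      by_cases hz : e ≤ z.2 ∧ z.2 ≤ f
      · have hsz := hsef z.2 hz.1 hz.2
        rw [A2 z (Or.inr (Or.inr (by simp [hsz])))]
        simp only [box, lstrip, mem_union, mem_ofPred_eq, hsz]
        constructor
        · rintro (⟨g1, g2, g3, g4⟩ | g)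
          · exact Or.inl ⟨by linarith, g4, g1, g2⟩
          · exact Or.inr g
        · rintro (⟨g1, g2, g3, g4⟩ | g)
          · exact Or.inl ⟨g3, g4, by linarith, g2⟩
          · exact Or.inr g
      · have k1 := A4 z
        have k2 := A5 z
        simp only [box, lstrip, mem_union, mem_ofPred_eq, A1, k1, k2]
        tauto
    have S1' : ∀ z : ℝ × ℝ, ((c ≤ z.2 ∧ z.2 ≤ d ∧ a + s z.2 ≤ z.1 ∧ z.1 ≤ b) ∨ z ∈ lstrip a e f)
        ↔ ((a ≤ z.1 ∧ z.1 ≤ b ∧ l z.1 ≤ z.2 ∧ z.2 ≤ u z.1) ∨ z ∈ lstrip a e f) := by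
      intro z
      refine or_congr_left ?_
      constructor
      · rintro ⟨g1, g2, g3, g4⟩
        have ha : a ≤ z.1 := by have := hs0 z.2; linarith
        refine ⟨ha, g4, ?_, ?_⟩
        · rw [hscd z.2 g1 g2] at g3
          have k : κ * (e - z.2) ≤ κ * max 0 (max (e - z.2) (z.2 - f)) :=
            mul_le_mul_of_nonneg_left ((le_max_left _ _).trans (le_max_right _ _)) hκ0.le
          simp only [hl, htab z.1 ha g4]
          refine max_le g1 ?_
          have : e - z.2 ≤ (z.1 - a) / κ := by rw [le_div_iff₀ hκ0]; linarith
          linarith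
        · rw [hscd z.2 g1 g2] at g3
          have k : κ * (z.2 - f) ≤ κ * max 0 (max (e - z.2) (z.2 - f)) :=
            mul_le_mul_of_nonneg_left ((le_max_right _ _).trans (le_max_right _ _)) hκ0.le
          simp only [hu, htab z.1 ha g4]
          refine le_min g2 ?_
          have : z.2 - f ≤ (z.1 - a) / κ := by rw [le_div_iff₀ hκ0]; linarith
          linarith
      · rintro ⟨g1, g2, g3, g4⟩
        simp only [hl, hu, htab z.1 g1 g2, max_le_iff, le_min_iff] at g3 g4
        refine ⟨g3.1, g4.1, ?_, g2⟩
        rw [hscd z.2 g3.1 g4.1]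
        have : max 0 (max (e - z.2) (z.2 - f)) ≤ (z.1 - a) / κ :=
          max_le (div_nonneg (by linarith) hκ0.le) (max_le (by linarith) (by linarith))
        rw [le_div_iff₀ hκ0] at this
        linarith
    have S2 : ∀ z : ℝ × ℝ, ((a ≤ (H2 z).1 ∧ (H2 z).1 ≤ b ∧ l (H2 z).1 ≤ (H2 z).2 ∧
        (H2 z).2 ≤ u' (H2 z).1) ∨ H2 z ∈ lstrip a e f) ↔
        ((a ≤ z.1 ∧ z.1 ≤ b ∧ l z.1 ≤ z.2 ∧ z.2 ≤ u z.1) ∨ z ∈ lstrip a e f) := by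
      intro z
      rcases le_or_gt z.1 a with hz | hz
      · rw [B2 z (Or.inr (Or.inr (hu'a _ hz))), hu'a _ hz]
      · have k : l z.1 ≤ (H2 z).2 ↔ l z.1 ≤ z.2 := by
          have := hl2 z.1
          rcases le_total z.2 m with h | h
          · rw [B2 z (Or.inl h)]
          · have := (B6 z).2 h
            constructor <;> intro <;> linarith
        have k' : ¬ z.1 ≤ a := not_le.2 hz
        simp only [lstrip, mem_ofPred_eq, B1, k, B3 z, k', false_and, or_false]
    have S3 : ∀ z : ℝ × ℝ, ((a ≤ (H3 z).1 ∧ (H3 z).1 ≤ b ∧ l' (H3 z).1 ≤ (H3 z).2 ∧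
        (H3 z).2 ≤ u' (H3 z).1) ∨ H3 z ∈ lstrip a e f) ↔
        ((a ≤ z.1 ∧ z.1 ≤ b ∧ l z.1 ≤ z.2 ∧ z.2 ≤ u' z.1) ∨ z ∈ lstrip a e f) := by
      intro z
      rcases le_or_gt z.1 a with hz | hz
      · rw [C2 z (Or.inr (Or.inr (hl'a _ hz))), hl'a _ hz]
      · have k : (H3 z).2 ≤ u' z.1 ↔ z.2 ≤ u' z.1 := by
          have := hu'1 z.1
          rcases le_total m z.2 with h | h
          · rw [C2 z (Or.inr (Or.inl h))]
          · have := (C5 z).2 h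
            constructor <;> intro <;> linarith
        have k' : ¬ z.1 ≤ a := not_le.2 hz
        simp only [lstrip, mem_ofPred_eq, C1, k, C4 z, k', false_and, or_false]
    have S4 : ∀ z : ℝ × ℝ, H4 z ∈ lstrip a e f ↔
        ((a ≤ z.1 ∧ z.1 ≤ b ∧ l' z.1 ≤ z.2 ∧ z.2 ≤ u' z.1) ∨ z ∈ lstrip a e f) := by
      intro z
      by_cases hz : c' ≤ z.2 ∧ z.2 ≤ d'
      · have k := D3 z
        have e1 : e ≤ z.2 := c2.trans hz.1
        have e2 : z.2 ≤ f := hz.2.trans d2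
        simp only [lstrip, mem_ofPred_eq, D1, k, e1, e2, and_true]
        rcases le_or_gt a z.1 with h | h
        · rw [hqin z.2 hz.1 hz.2 z.1 h]
          constructor
          · rintro ⟨g1, g2, g3⟩
            left
            rw [hl'ab _ h g1, hu'ab _ h g1]
            exact ⟨h, g1, g2, g3⟩
          · rintro (⟨_, g1, g2, g3⟩ | g)
            · rw [hl'ab _ h g1] at g2
              rw [hu'ab _ h g1] at g3
              exact ⟨g1, g2, g3⟩
            · have : z.1 = a := le_antisymm g h
              rw [this]
              exact ⟨hab.le, by linarith, by linarith⟩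
        · have := hqa z.2
          exact ⟨fun _ => Or.inr h.le, fun _ => by linarith⟩
      · have hz' : z.2 ≤ c' ∨ d' ≤ z.2 := by
          by_contra hcon
          push Not at hcon
          exact hz ⟨hcon.1.le, hcon.2.le⟩
        rw [D2 z (Or.inr (Or.inr (hqout _ hz')))]
        refine ⟨Or.inr, ?_⟩
        rintro (⟨h1, h2, h3, h4⟩ | g)
        · exfalso
          rw [hl'ab _ h1 h2] at h3
          rw [hu'ab _ h1 h2] at h4
          have : 0 ≤ τ * (z.1 - a) := mul_nonneg hτ0.le (by linarith)
          exact hz ⟨by linarith, by linarith⟩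
        · exact g
    intro z
    simp only [Homeomorph.trans_apply]
    rw [S4, S3, S2, ← S1', S1]

/-- Mirror image of `move_left`. -/
lemma move_right {a b c d e f δ : ℝ} (hab : a < b) (hδ : 0 < δ) (hcd : c < d) (hef : e < f)
    (hcf : c < f) (hed : e < d) :
    ∃ Φ : ℝ × ℝ ≃ₜ ℝ × ℝ, (∀ z, z ∉ box (a - δ) (b + δ) (c - δ) (d + δ) → Φ z = z) ∧
      ∀ z, Φ z ∈ rstrip b e f ↔ z ∈ box a b c d ∪ rstrip b e f := by
  obtain ⟨Φ, h1, h2⟩ := move_left (a := -b) (b := -a) (by linarith) hδ hcd hef hcf hed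
  let ν : ℝ × ℝ ≃ₜ ℝ × ℝ := (Homeomorph.neg ℝ).prodCongr (Homeomorph.refl ℝ)
  have hν : ∀ z, ν z = (-z.1, z.2) := fun z => rfl
  refine ⟨(ν.trans Φ).trans ν, ?_, ?_⟩
  · intro z hz
    have : Φ (ν z) = ν z := by
      apply h1
      intro h
      apply hz
      simp only [box, mem_ofPred_eq, hν] at h ⊢
      exact ⟨by linarith, by linarith, h.2.2⟩
    simp only [Homeomorph.trans_apply, this]
    simp [hν]
  · intro z
    have := h2 (ν z)
    simp only [Homeomorph.trans_apply]
    have k1 : ν (Φ (ν z)) ∈ rstrip b e f ↔ Φ (ν z) ∈ lstrip (-b) e f := by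
      simp only [hν, rstrip, lstrip, mem_ofPred_eq, le_neg]
    rw [k1, this]
    simp only [hν, rstrip, lstrip, box, mem_union, mem_ofPred_eq, neg_le_neg_iff]
    tauto

/-! ### Digital topology -/

/-- edge adjacency of grid cells -/
def adj4 (u v : ℤ × ℤ) : Prop :=
  (u.1 = v.1 ∧ (v.2 = u.2 + 1 ∨ u.2 = v.2 + 1)) ∨ (u.2 = v.2 ∧ (v.1 = u.1 + 1 ∨ u.1 = v.1 + 1))

/-- adjacency (or equality) of grid cells, corners included -/
def adj8 (u v : ℤ × ℤ) : Prop :=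
  u.1 ≤ v.1 + 1 ∧ v.1 ≤ u.1 + 1 ∧ u.2 ≤ v.2 + 1 ∧ v.2 ≤ u.2 + 1

/-- connection by an edge path inside `D` -/
def Conn4 (D : Set (ℤ × ℤ)) : ℤ × ℤ → ℤ × ℤ → Prop :=
  Relation.ReflTransGen fun u v => adj4 u v ∧ u ∈ D ∧ v ∈ D

/-- connection by a corner path inside `D` -/
def Conn8 (D : Set (ℤ × ℤ)) : ℤ × ℤ → ℤ × ℤ → Prop :=
  Relation.ReflTransGen fun u v => adj8 u v ∧ u ∈ D ∧ v ∈ D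

/-- no two cells of `D` meet only in a corner -/
def WC (D : Set (ℤ × ℤ)) : Prop :=
  ∀ i j, ((i, j) ∈ D → (i + 1, j + 1) ∈ D → (i + 1, j) ∈ D ∨ (i, j + 1) ∈ D) ∧
    ((i + 1, j) ∈ D → (i, j + 1) ∈ D → (i, j) ∈ D ∨ (i + 1, j + 1) ∈ D)

lemma adj4.symm {u v : ℤ × ℤ} (h : adj4 u v) : adj4 v u := by
  unfold adj4 at *; omega

lemma adj8.symm {u v : ℤ × ℤ} (h : adj8 u v) : adj8 v u := by
  unfold adj8 at *; omega

lemma adj4.adj8 {u v : ℤ × ℤ} (h : adj4 u v) : adj8 u v := by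
  unfold adj4 at h; unfold _root_.adj8; omega

lemma Conn4.symm {D : Set (ℤ × ℤ)} {u v : ℤ × ℤ} (h : Conn4 D u v) : Conn4 D v u := by
  have : Std.Symm (fun u v : ℤ × ℤ => adj4 u v ∧ u ∈ D ∧ v ∈ D) :=
    ⟨fun a b h => ⟨h.1.symm, h.2.2, h.2.1⟩⟩
  exact Std.Symm.symm (r := Relation.ReflTransGen _) _ _ h

lemma Conn8.symm {D : Set (ℤ × ℤ)} {u v : ℤ × ℤ} (h : Conn8 D u v) : Conn8 D v u := by
  have : Std.Symm (fun u v : ℤ × ℤ => adj8 u v ∧ u ∈ D ∧ v ∈ D) :=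
    ⟨fun a b h => ⟨h.1.symm, h.2.2, h.2.1⟩⟩
  exact Std.Symm.symm (r := Relation.ReflTransGen _) _ _ h

lemma Conn4.trans {D : Set (ℤ × ℤ)} {u v w : ℤ × ℤ} (h : Conn4 D u v) (h' : Conn4 D v w) :
    Conn4 D u w := Relation.ReflTransGen.trans h h'

lemma Conn8.trans {D : Set (ℤ × ℤ)} {u v w : ℤ × ℤ} (h : Conn8 D u v) (h' : Conn8 D v w) :
    Conn8 D u w := Relation.ReflTransGen.trans h h'

lemma Conn4.mono {D E : Set (ℤ × ℤ)} (hDE : D ⊆ E) {u v : ℤ × ℤ} (h : Conn4 D u v) :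
    Conn4 E u v :=
  Relation.ReflTransGen.mono (fun _ _ h => ⟨h.1, hDE h.2.1, hDE h.2.2⟩) _ _ h

lemma Conn8.mono {D E : Set (ℤ × ℤ)} (hDE : D ⊆ E) {u v : ℤ × ℤ} (h : Conn8 D u v) :
    Conn8 E u v :=
  Relation.ReflTransGen.mono (fun _ _ h => ⟨h.1, hDE h.2.1, hDE h.2.2⟩) _ _ h

lemma Conn4.conn8 {D : Set (ℤ × ℤ)} {u v : ℤ × ℤ} (h : Conn4 D u v) : Conn8 D u v :=
  Relation.ReflTransGen.mono (fun _ _ h => ⟨h.1.adj8, h.2.1, h.2.2⟩) _ _ h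

lemma Conn4.single {D : Set (ℤ × ℤ)} {u v : ℤ × ℤ} (h : adj4 u v) (hu : u ∈ D) (hv : v ∈ D) :
    Conn4 D u v := Relation.ReflTransGen.single ⟨h, hu, hv⟩

lemma Conn8.single {D : Set (ℤ × ℤ)} {u v : ℤ × ℤ} (h : adj8 u v) (hu : u ∈ D) (hv : v ∈ D) :
    Conn8 D u v := Relation.ReflTransGen.single ⟨h, hu, hv⟩

lemma Conn4.refl {D : Set (ℤ × ℤ)} (u : ℤ × ℤ) : Conn4 D u u := Relation.ReflTransGen.refl

lemma Conn8.refl {D : Set (ℤ × ℤ)} (u : ℤ × ℤ) : Conn8 D u u := Relation.ReflTransGen.refl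

lemma Conn4.mem {D : Set (ℤ × ℤ)} {u v : ℤ × ℤ} (h : Conn4 D u v) (hu : u ∈ D) : v ∈ D := by
  induction h with
  | refl => exact hu
  | tail _ h _ => exact h.2.2

lemma Conn8.mem {D : Set (ℤ × ℤ)} {u v : ℤ × ℤ} (h : Conn8 D u v) (hu : u ∈ D) : v ∈ D := by
  induction h with
  | refl => exact hu
  | tail _ h _ => exact h.2.2

lemma conn4_vert_aux {D : Set (ℤ × ℤ)} {i a : ℤ} (n : ℕ)
    (h : ∀ j, a ≤ j → j ≤ a + n → (i, j) ∈ D) : Conn4 D (i, a) (i, a + n) := by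
  induction n with
  | zero => simpa using Conn4.refl (i, a)
  | succ n ih =>
    refine (ih (fun j h1 h2 => h j h1 (by push_cast; omega))).trans ?_
    refine Conn4.single ?_ (h _ (by omega) (by push_cast; omega)) (h _ (by push_cast; omega) le_rfl)
    unfold adj4; push_cast; simp; omega

lemma conn4_vert {D : Set (ℤ × ℤ)} {i a b : ℤ}
    (h : ∀ j, min a b ≤ j → j ≤ max a b → (i, j) ∈ D) : Conn4 D (i, a) (i, b) := by
  rcases le_total a b with hab | hab
  · have := conn4_vert_aux (D := D) (i := i) (a := a) (b - a).toNat
      (fun j h1 h2 => h j (by omega) (by omega))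
    rwa [show a + ((b - a).toNat : ℤ) = b by omega] at this
  · have := conn4_vert_aux (D := D) (i := i) (a := b) (a - b).toNat
      (fun j h1 h2 => h j (by omega) (by omega))
    rw [show b + ((a - b).toNat : ℤ) = a by omega] at this
    exact this.symm

lemma conn4_horiz_aux {D : Set (ℤ × ℤ)} {j a : ℤ} (n : ℕ)
    (h : ∀ i, a ≤ i → i ≤ a + n → (i, j) ∈ D) : Conn4 D (a, j) (a + n, j) := by
  induction n with
  | zero => simpa using Conn4.refl (a, j)
  | succ n ih =>
    refine (ih (fun j h1 h2 => h j h1 (by push_cast; omega))).trans ?_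
    refine Conn4.single ?_ (h _ (by omega) (by push_cast; omega)) (h _ (by push_cast; omega) le_rfl)
    unfold adj4; push_cast; simp; omega

lemma conn4_horiz {D : Set (ℤ × ℤ)} {j a b : ℤ}
    (h : ∀ i, min a b ≤ i → i ≤ max a b → (i, j) ∈ D) : Conn4 D (a, j) (b, j) := by
  rcases le_total a b with hab | hab
  · have := conn4_horiz_aux (D := D) (j := j) (a := a) (b - a).toNat
      (fun j h1 h2 => h j (by omega) (by omega))
    rwa [show a + ((b - a).toNat : ℤ) = b by omega] at this
  · have := conn4_horiz_aux (D := D) (j := j) (a := b) (a - b).toNat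
      (fun j h1 h2 => h j (by omega) (by omega))
    rw [show b + ((a - b).toNat : ℤ) = a by omega] at this
    exact this.symm

/-- indicator of the half column above `(x, y)` -/
def hcol (c : ℤ × ℤ) (x y : ℤ) : ℤ := if c.1 = x ∧ y ≤ c.2 then 1 else 0

/-- A path of cells has a winding function on grid vertices. -/
lemma winding {ρ : ℤ × ℤ → ℤ × ℤ → Prop} (hρ : ∀ u v, ρ u v → adj4 u v) {a b : ℤ × ℤ}
    (h : Relation.ReflTransGen ρ a b) :
    ∃ f : ℤ → ℤ → ℤ,
      (∀ x y, ¬ ρ (x - 1, y) (x, y) → ¬ ρ (x, y) (x - 1, y) → f x y = f x (y + 1)) ∧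
      (∀ x y, ¬ ρ (x, y - 1) (x, y) → ¬ ρ (x, y) (x, y - 1) →
        f x y - f (x + 1) y = hcol b x y - hcol a x y) := by
  induction h with
  | refl => exact ⟨fun _ _ => 0, fun _ _ _ _ => rfl, fun _ _ _ _ => by simp⟩
  | @tail b b' _ hs ih =>
    obtain ⟨f, hV, hH⟩ := ih
    obtain ⟨i, j⟩ := b
    obtain ⟨i', j'⟩ := b'
    have hadj := hρ _ _ hs
    simp only [adj4] at hadj
    rcases hadj with ⟨rfl, h | h⟩ | ⟨rfl, h | h⟩
    · subst h
      refine ⟨f, hV, fun x y h1 h2 => ?_⟩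
      rw [hH x y h1 h2]
      by_cases hxy : x = i ∧ y = j + 1
      · obtain ⟨rfl, rfl⟩ := hxy
        rw [add_sub_cancel_right] at h1
        exact absurd hs h1
      · simp only [hcol]
        split_ifs <;> omega
    · subst h
      refine ⟨f, hV, fun x y h1 h2 => ?_⟩
      rw [hH x y h1 h2]
      by_cases hxy : x = i ∧ y = j' + 1
      · obtain ⟨rfl, rfl⟩ := hxy
        rw [add_sub_cancel_right] at h2
        exact absurd hs h2
      · simp only [hcol]
        split_ifs <;> omega
    · subst h
      refine ⟨fun x y => f x y + if x = i + 1 ∧ y ≤ j then 1 else 0, fun x y h1 h2 => ?_,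
        fun x y h1 h2 => ?_⟩
      · have := hV x y h1 h2
        by_cases hxy : x = i + 1 ∧ y = j
        · obtain ⟨rfl, rfl⟩ := hxy
          rw [add_sub_cancel_right] at h1
          exact absurd hs h1
        · dsimp only
          split_ifs <;> omega
      · have := hH x y h1 h2
        simp only [hcol] at this ⊢
        split_ifs at this ⊢ <;> omega
    · subst h
      refine ⟨fun x y => f x y - if x = i' + 1 ∧ y ≤ j then 1 else 0, fun x y h1 h2 => ?_,
        fun x y h1 h2 => ?_⟩
      · have := hV x y h1 h2
        by_cases hxy : x = i' + 1 ∧ y = j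
        · obtain ⟨rfl, rfl⟩ := hxy
          rw [add_sub_cancel_right] at h2
          exact absurd hs h2
        · dsimp only
          split_ifs <;> omega
      · have := hH x y h1 h2
        simp only [hcol] at this ⊢
        split_ifs at this ⊢ <;> omega

lemma const_chain {g : ℤ → ℤ} {p q : ℤ} (hpq : p ≤ q) (h : ∀ y, p ≤ y → y < q → g y = g (y + 1)) :
    g p = g q := by
  obtain ⟨n, rfl⟩ := Int.le.dest hpq
  clear hpq
  induction n with
  | zero => simp
  | succ n ih =>
    rw [ih (fun y h1 h2 => h y h1 (by push_cast; omega)), h (p + n) (by omega) (by push_cast; omega)]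
    push_cast; ring_nf

/-- Discrete Jordan-type lemma. -/
lemma parity {D : Set (ℤ × ℤ)} {X p q j0 : ℤ} (hp : p ≤ j0) (hq : j0 < q)
    (hD1 : (X - 1, j0) ∈ D) (hD2 : (X, j0) ∈ D)
    (hpath : Relation.ReflTransGen (fun u v : ℤ × ℤ => adj4 u v ∧ u ∈ D ∧ v ∈ D ∧
      ¬ (u.2 = v.2 ∧ p ≤ u.2 ∧ u.2 < q ∧ max u.1 v.1 = X)) (X - 1, j0) (X, j0))
    {t t' : ℤ × ℤ} (ht : t ∉ D) (ht' : t' ∉ D) (hconn : Conn8 Dᶜ t t')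
    (hlow : t.2 = p - 1 ∧ (t.1 = X ∨ t.1 = X - 1)) (hhigh : t'.2 = q ∧ (t'.1 = X ∨ t'.1 = X - 1)) :
    False := by
  obtain ⟨f, hV, hH⟩ := winding (fun u v h => h.1) hpath
  obtain ⟨F, hF⟩ : ∃ F : ℤ → ℤ → ℤ, F = fun x y => f x y - if x = X ∧ y ≤ j0 then 1 else 0 :=
    ⟨_, rfl⟩
  have hH' : ∀ x y, ((x, y) ∉ D ∨ (x, y - 1) ∉ D) → F x y = F (x + 1) y := by
    intro x y h
    have := hH x y (fun h' => h.elim (fun h => h h'.2.2.1) (fun h => h h'.2.1))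
      (fun h' => h.elim (fun h => h h'.2.1) (fun h => h h'.2.2.1))
    simp only [hF, hcol] at this ⊢
    split_ifs at this ⊢ <;> omega
  have hV' : ∀ x y, ((x, y) ∉ D ∨ (x - 1, y) ∉ D) → F x y = F x (y + 1) := by
    intro x y h
    have := hV x y (fun h' => h.elim (fun h => h h'.2.2.1) (fun h => h h'.2.1))
      (fun h' => h.elim (fun h => h h'.2.1) (fun h => h h'.2.2.1))
    by_cases hxy : x = X ∧ y = j0
    · obtain ⟨rfl, rfl⟩ := hxy
      exact absurd hD2 (h.elim id (fun h => absurd hD1 h))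
    · simp only [hF]
      split_ifs <;> omega
  have hVc : ∀ y, p ≤ y → y < q → f X y = f X (y + 1) := by
    intro y h1 h2
    apply hV
    · rintro ⟨_, _, _, h⟩
      exact h ⟨rfl, h1, h2, by simp⟩
    · rintro ⟨_, _, _, h⟩
      exact h ⟨rfl, h1, h2, by simp⟩
  have hfpq : f X p = f X q := const_chain (g := f X) (by omega) hVc
  have hFne : F X p ≠ F X q := by
    have e1 : F X p = f X p - 1 := by simp [hF, hp]
    have e2 : F X q = f X q := by simp [hF, hq]
    rw [e1, e2, hfpq]
    omega
  -- `F` is constant on the vertices of complementary cells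
  have hcell : ∀ s : ℤ × ℤ, s ∉ D → ∀ x y, (x = s.1 ∨ x = s.1 + 1) → (y = s.2 ∨ y = s.2 + 1) →
      F x y = F s.1 s.2 := by
    rintro ⟨i, j⟩ hs x y hx hy
    have e1 : F i j = F (i + 1) j := hH' i j (Or.inl hs)
    have e2 : F i j = F i (j + 1) := hV' i j (Or.inl hs)
    have e3 : F i (j + 1) = F (i + 1) (j + 1) := hH' i (j + 1) (Or.inr (by simpa using hs))
    rcases hx with rfl | rfl <;> rcases hy with rfl | rfl
    · rfl
    · exact e2.symm
    · exact e1.symm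
    · exact (e2.trans e3).symm
  have hconst : F t.1 t.2 = F t'.1 t'.2 := by
    clear hlow hhigh
    induction hconn with
    | refl => rfl
    | @tail b b' hb hs ih =>
      rw [ih hs.2.1]
      obtain ⟨⟨h1, h2, h3, h4⟩, hb1, hb2⟩ := hs
      rw [← hcell b hb1 (max b.1 b'.1) (max b.2 b'.2) (by omega) (by omega),
        ← hcell b' hb2 (max b.1 b'.1) (max b.2 b'.2) (by omega) (by omega)]
  apply hFne
  rw [hcell t ht X p (by omega) (by omega), hconst,
    hcell t' ht' X q (by omega) (by omega)]

/-- maximal vertical run -/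
def IsRun (D : Set (ℤ × ℤ)) (i c d : ℤ) : Prop :=
  c < d ∧ (∀ j, c ≤ j → j < d → (i, j) ∈ D) ∧ (i, c - 1) ∉ D ∧ (i, d) ∉ D

/-- the cells of a vertical run -/
def runset (i c d : ℤ) : Set (ℤ × ℤ) := {v | v.1 = i ∧ c ≤ v.2 ∧ v.2 < d}

/-- the run of a cell -/
def Rn (D : Set (ℤ × ℤ)) (k : ℤ × ℤ) : Set (ℤ × ℤ) :=
  {v | v.1 = k.1 ∧ ∀ j, min k.2 v.2 ≤ j → j ≤ max k.2 v.2 → (k.1, j) ∈ D}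

lemma Rn_symm {D : Set (ℤ × ℤ)} {k v : ℤ × ℤ} (h : v ∈ Rn D k) : k ∈ Rn D v := by
  refine ⟨h.1.symm, fun j h1 h2 => ?_⟩
  rw [h.1]
  exact h.2 j (by omega) (by omega)

lemma Rn_trans {D : Set (ℤ × ℤ)} {k v w : ℤ × ℤ} (h : v ∈ Rn D k) (h' : w ∈ Rn D v) :
    w ∈ Rn D k := by
  refine ⟨h'.1.trans h.1, fun j h1 h2 => ?_⟩
  by_cases hj : min k.2 v.2 ≤ j ∧ j ≤ max k.2 v.2
  · exact h.2 j hj.1 hj.2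
  · rw [← h.1]
    exact h'.2 j (by omega) (by omega)

lemma Rn_self {D : Set (ℤ × ℤ)} {k : ℤ × ℤ} (h : k ∈ D) : k ∈ Rn D k :=
  ⟨rfl, fun j h1 h2 => by
    have : j = k.2 := by omega
    rw [this]; exact h⟩

lemma Rn_mem {D : Set (ℤ × ℤ)} {k v : ℤ × ℤ} (h : v ∈ Rn D k) : v ∈ D := by
  have := h.2 v.2 (by omega) (by omega)
  rw [← h.1] at this
  exact this

lemma Rn_conn {D : Set (ℤ × ℤ)} {k v : ℤ × ℤ} (h : v ∈ Rn D k) : Conn4 (Rn D k) k v := by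
  obtain ⟨x, y⟩ := v
  obtain ⟨x', y'⟩ := k
  have hx : x = x' := h.1
  subst hx
  apply conn4_vert
  intro j h1 h2
  exact ⟨rfl, fun j' h1' h2' => h.2 j' (by simp at *; omega) (by simp at *; omega)⟩

lemma finite_bdd {D : Set (ℤ × ℤ)} (hD : D.Finite) :
    ∃ M : ℤ, 0 < M ∧ ∀ k ∈ D, -M < k.1 ∧ k.1 < M ∧ -M < k.2 ∧ k.2 < M := by
  obtain ⟨s, rfl⟩ := hD.exists_finset_coe
  refine ⟨1 + ∑ k ∈ s, (|k.1| + |k.2|), ?_, ?_⟩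
  · have : 0 ≤ ∑ k ∈ s, (|k.1| + |k.2|) := Finset.sum_nonneg fun k _ => by positivity
    omega
  · intro k hk
    have : |k.1| + |k.2| ≤ ∑ k ∈ s, (|k.1| + |k.2|) :=
      Finset.single_le_sum (f := fun k : ℤ × ℤ => |k.1| + |k.2|) (fun k _ => by positivity) hk
    have h1 := abs_nonneg k.1
    have h2 := abs_nonneg k.2
    have h3 := le_abs_self k.1
    have h4 := le_abs_self k.2
    have h5 := neg_abs_le k.1
    have h6 := neg_abs_le k.2
    omega

lemma exists_run {D : Set (ℤ × ℤ)} (hD : D.Finite) {k : ℤ × ℤ} (hk : k ∈ D) :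
    ∃ c d, IsRun D k.1 c d ∧ c ≤ k.2 ∧ k.2 < d := by
  obtain ⟨M, hM, hb⟩ := finite_bdd hD
  have hkb := hb k hk
  obtain ⟨d, hd1, hd2⟩ := Int.exists_least_of_bdd (P := fun j => k.2 < j ∧ (k.1, j) ∉ D)
    ⟨k.2, fun z hz => hz.1.le⟩ ⟨M, by omega, fun h => by have := hb _ h; simp at this⟩
  obtain ⟨c, hc1, hc2⟩ := Int.exists_greatest_of_bdd (P := fun j => j < k.2 ∧ (k.1, j) ∉ D)
    ⟨k.2, fun z hz => hz.1.le⟩ ⟨-M, by omega, fun h => by have := hb _ h; simp at this⟩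
  refine ⟨c + 1, d, ⟨by omega, fun j h1 h2 => ?_, by simpa using hc1.2, hd1.2⟩, by omega, by omega⟩
  by_contra hj
  rcases lt_trichotomy j k.2 with h | h | h
  · have := hc2 j ⟨h, hj⟩; omega
  · rw [h] at hj; exact hj hk
  · have := hd2 j ⟨h, hj⟩; omega

lemma Rn_eq_runset {D : Set (ℤ × ℤ)} {k : ℤ × ℤ} {c d : ℤ} (h : IsRun D k.1 c d)
    (h1 : c ≤ k.2) (h2 : k.2 < d) : Rn D k = runset k.1 c d := by
  ext v
  constructor
  · rintro ⟨hv1, hv2⟩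
    refine ⟨hv1, ?_, ?_⟩
    · by_contra hcon
      exact h.2.2.1 (hv2 (c - 1) (by omega) (by omega))
    · by_contra hcon
      exact h.2.2.2 (hv2 d (by omega) (by omega))
  · rintro ⟨hv1, hv2, hv3⟩
    exact ⟨hv1, fun j h1 h2 => h.2.1 j (by omega) (by omega)⟩

/-- Existence of a run whose removal does not disconnect, different from a given one. -/
lemma exists_noncut {D : Set (ℤ × ℤ)} (hfin : D.Finite)
    (hconn : ∀ u ∈ D, ∀ v ∈ D, Conn4 D u v) {k0 : ℤ × ℤ} (hk0 : k0 ∈ D)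
    (hne : ∃ k ∈ D, k ∉ Rn D k0) :
    ∃ k ∈ D, k ∉ Rn D k0 ∧ ∀ u ∈ D \ Rn D k, ∀ v ∈ D \ Rn D k, Conn4 (D \ Rn D k) u v := by
  classical
  let comp : ℤ × ℤ → Set (ℤ × ℤ) := fun k => {v | v ∈ D ∧ Conn4 (D \ Rn D k) k0 v}
  have hcfin : ∀ k, (comp k).Finite := fun k => hfin.subset fun v hv => hv.1
  have hsfin : (D \ Rn D k0).Finite := hfin.subset sdiff_subset
  obtain ⟨k, hk, hmax⟩ := Set.exists_max_image (D \ Rn D k0) (fun k => (comp k).ncard) hsfin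
    (by obtain ⟨k, h1, h2⟩ := hne; exact ⟨k, h1, h2⟩)
  refine ⟨k, hk.1, hk.2, ?_⟩
  have hk0k : k0 ∉ Rn D k := fun h => hk.2 (Rn_symm h)
  suffices hall : ∀ v ∈ D \ Rn D k, Conn4 (D \ Rn D k) k0 v from
    fun u hu v hv => (hall u hu).symm.trans (hall v hv)
  by_contra hcon
  push Not at hcon
  obtain ⟨w, hw, hw2⟩ := hcon
  have hw0 : w ∈ D \ Rn D k0 := by
    refine ⟨hw.1, fun h => hw2 ?_⟩
    have hs : Rn D k0 ⊆ D \ Rn D k := fun v hv =>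
      ⟨Rn_mem hv, fun hv' => hk.2 (Rn_trans hv (Rn_symm hv'))⟩
    exact (Rn_conn h).mono hs
  have hcw : ∀ v ∈ comp k, v ∉ Rn D w := by
    intro v hv hvw
    apply hw2
    have hs : Rn D w ⊆ D \ Rn D k := fun x hx =>
      ⟨Rn_mem hx, fun hx' => hw.2 (Rn_trans hx' (Rn_symm hx))⟩
    exact hv.2.trans ((Rn_conn hvw).symm.mono hs)
  have hsub : comp k ⊆ comp w := by
    rintro v ⟨hv, hv2⟩
    refine ⟨hv, ?_⟩
    induction hv2 with
    | refl => exact Conn4.refl _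
    | @tail b b' hb hs ih =>
      refine (ih hs.2.1.1).trans (Conn4.single hs.1 ⟨hs.2.1.1, hcw b ⟨hs.2.1.1, hb⟩⟩
        ⟨hs.2.2.1, hcw b' ⟨hs.2.2.1, hb.tail hs⟩⟩)
  have hex : ∃ b ∈ comp k, ∃ r ∈ Rn D k, adj4 b r := by
    have hpath := hconn k0 hk0 k hk.1
    by_contra hno
    push Not at hno
    have : ∀ v, Conn4 D k0 v → v ∈ comp k := by
      intro v hv
      induction hv with
      | refl => exact ⟨hk0, Conn4.refl _⟩
      | @tail b b' hb hs ih =>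
        have hb' : b' ∉ Rn D k := fun h => hno b ih b' h hs.1
        have hbk : b ∉ Rn D k := by
          have := ih.2.mem ⟨hk0, hk0k⟩
          exact this.2
        exact ⟨hs.2.2, ih.2.trans (Conn4.single hs.1 ⟨hs.2.1, hbk⟩ ⟨hs.2.2, hb'⟩)⟩
    have h := (this k hpath).2.mem ⟨hk0, hk0k⟩
    exact h.2 (Rn_self hk.1)
  obtain ⟨b, hb, r, hr, hbr⟩ := hex
  have hrw : r ∉ Rn D w := fun h => hw.2 (Rn_trans hr (Rn_symm h))
  have hrc : r ∈ comp w := by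
    refine ⟨Rn_mem hr, (hsub hb).2.trans (Conn4.single hbr ⟨hb.1, hcw b hb⟩ ⟨Rn_mem hr, hrw⟩)⟩
  have hrn : r ∉ comp k := fun h => (h.2.mem ⟨hk0, hk0k⟩).2 hr
  have hlt : (comp k).ncard < (comp w).ncard :=
    Set.ncard_lt_ncard ⟨hsub, fun h => hrn (h hrc)⟩ (hcfin w)
  have := hmax w hw0
  omega

/-- A non-cut run has all its horizontal neighbours in a single run. -/
lemma leaf_unique {D : Set (ℤ × ℤ)} (hfin : D.Finite)
    (hco : ∀ u ∉ D, ∀ v ∉ D, Conn8 Dᶜ u v) {i c d : ℤ} (hR : IsRun D i c d)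
    (hcut : ∀ u ∈ D \ runset i c d, ∀ v ∈ D \ runset i c d, Conn4 (D \ runset i c d) u v)
    {l l2 : ℤ × ℤ} (hl : l ∈ D) (hl2 : l2 ∈ D)
    (hli : l.1 = i - 1 ∨ l.1 = i + 1) (hlj : c ≤ l.2 ∧ l.2 < d)
    (hli2 : l2.1 = i - 1 ∨ l2.1 = i + 1) (hlj2 : c ≤ l2.2 ∧ l2.2 < d) :
    l2 ∈ Rn D l := by
  by_contra hcon
  obtain ⟨e, f, hL, he, hf⟩ := exists_run hfin hl
  rw [Rn_eq_runset hL he hf] at hcon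
  obtain ⟨x, j⟩ := l
  obtain ⟨x2, j2⟩ := l2
  simp only at hli hlj hli2 hlj2 hL he hf hcon
  have hij : (i, j) ∈ D := hR.2.1 j hlj.1 hlj.2
  have hij2 : (i, j2) ∈ D := hR.2.1 j2 hlj2.1 hlj2.2
  have hxr : (x, j) ∉ runset i c d := fun h => by have := h.1; simp at this; omega
  have hxr2 : (x2, j2) ∉ runset i c d := fun h => by have := h.1; simp at this; omega
  have hnot : ¬ (x2 = x ∧ e ≤ j2 ∧ j2 < f) := hcon
  obtain ⟨ρ, hρ⟩ : ∃ ρ : ℤ × ℤ → ℤ × ℤ → Prop, ρ = fun u v => adj4 u v ∧ u ∈ D ∧ v ∈ D ∧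
      ¬ (u.2 = v.2 ∧ max c e ≤ u.2 ∧ u.2 < min d f ∧ max u.1 v.1 = max x i) := ⟨_, rfl⟩
  have hρs : Std.Symm ρ := ⟨fun u v h => by
    subst hρ
    refine ⟨h.1.symm, h.2.2.1, h.2.1, fun h' => h.2.2.2 ⟨h'.1.symm, ?_, ?_, ?_⟩⟩
    · rw [← h'.1]; exact h'.2.1
    · rw [← h'.1]; exact h'.2.2.1
    · rw [max_comm]; exact h'.2.2.2⟩
  have hpath : Relation.ReflTransGen ρ (x, j) (i, j) := by
    have p1 : Relation.ReflTransGen ρ (x, j) (x2, j2) := by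
      refine Relation.ReflTransGen.mono ?_ _ _ (hcut _ ⟨hl, hxr⟩ _ ⟨hl2, hxr2⟩)
      rintro ⟨u1, u2⟩ ⟨v1, v2⟩ ⟨h1, h2, h3⟩
      subst hρ
      refine ⟨h1, h2.1, h3.1, fun h => ?_⟩
      have hu : ¬ (u1 = i ∧ c ≤ u2 ∧ u2 < d) := h2.2
      have hv : ¬ (v1 = i ∧ c ≤ v2 ∧ v2 < d) := h3.2
      simp only [adj4] at h h1
      omega
    have p2 : ρ (x2, j2) (i, j2) := by
      subst hρ
      refine ⟨?_, hl2, hij2, ?_⟩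
      · exact Or.inr ⟨rfl, by show i = x2 + 1 ∨ x2 = i + 1; omega⟩
      · rintro ⟨_, g1, g2, g3⟩
        dsimp only at g1 g2 g3
        apply hnot
        rcases hli with h | h <;> rcases hli2 with h' | h' <;> omega
    have p3 : Relation.ReflTransGen ρ (i, j2) (i, j) := by
      have : Conn4 (runset i c d) (i, j2) (i, j) :=
        conn4_vert fun j' h1 h2 => ⟨rfl, by show c ≤ j'; omega, by show j' < d; omega⟩
      refine Relation.ReflTransGen.mono ?_ _ _ this
      rintro ⟨u1, u2⟩ ⟨v1, v2⟩ ⟨h1, h2, h3⟩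
      obtain ⟨g1, g2, g3⟩ := h2
      obtain ⟨g4, g5, g6⟩ := h3
      simp only at g1 g2 g3 g4 g5 g6
      subst g1 g4 hρ
      refine ⟨h1, hR.2.1 _ g2 g3, hR.2.1 _ g5 g6, ?_⟩
      simp only [adj4] at h1
      simp only; omega
    exact (p1.tail p2).trans p3
  have hpath' : Relation.ReflTransGen ρ (max x i - 1, j) (max x i, j) := by
    rcases hli with h | h
    · rw [show max x i = i by omega, ← h]; exact hpath
    · rw [show max x i = x by omega, show x - 1 = i by omega]
      exact Std.Symm.symm (r := Relation.ReflTransGen _) _ _ hpath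
  have hd1 : (max x i - 1, j) ∈ D := by
    rcases hli with h | h
    · rw [show max x i = i by omega, ← h]; exact hl
    · rw [show max x i = x by omega, show x - 1 = i by omega]; exact hij
  have hd2 : (max x i, j) ∈ D := by
    rcases hli with h | h
    · rw [show max x i = i by omega]; exact hij
    · rw [show max x i = x by omega]; exact hl
  obtain ⟨t, ht, ht2⟩ : ∃ t, t ∉ D ∧ (t.2 = max c e - 1 ∧ (t.1 = max x i ∨ t.1 = max x i - 1)) := by
    rcases le_total c e with h | h
    · exact ⟨(x, e - 1), hL.2.2.1, by simp only; omega⟩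
    · exact ⟨(i, c - 1), hR.2.2.1, by simp only; omega⟩
  obtain ⟨t', ht', ht2'⟩ : ∃ t, t ∉ D ∧ (t.2 = min d f ∧ (t.1 = max x i ∨ t.1 = max x i - 1)) := by
    rcases le_total d f with h | h
    · exact ⟨(i, d), hR.2.2.2, by simp only; omega⟩
    · exact ⟨(x, f), hL.2.2.2, by simp only; omega⟩
  subst hρ
  exact parity (by omega) (by omega) hd1 hd2 hpath' ht ht' (hco t ht t' ht') ht2 ht2'

def Grid (ξ : ℤ → ℝ) (δ : ℝ) : Prop := 0 < δ ∧ ∀ i, ξ i + 3 * δ < ξ (i + 1)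

/-- closed grid cell -/
def cell (ξ : ℤ → ℝ) (k : ℤ × ℤ) : Set (ℝ × ℝ) := box (ξ k.1) (ξ (k.1 + 1)) (ξ k.2) (ξ (k.2 + 1))

/-- thickened grid cell -/
def tcell (ξ : ℤ → ℝ) (δ : ℝ) (k : ℤ × ℤ) : Set (ℝ × ℝ) :=
  box (ξ k.1 - δ) (ξ (k.1 + 1) + δ) (ξ k.2 - δ) (ξ (k.2 + 1) + δ)

/-- union of closed cells -/
def XX (ξ : ℤ → ℝ) (S : Set (ℤ × ℤ)) : Set (ℝ × ℝ) := {z | ∃ k ∈ S, z ∈ cell ξ k}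

lemma Grid.mono {ξ : ℤ → ℝ} {δ : ℝ} (h : Grid ξ δ) : StrictMono ξ :=
  strictMono_int_of_lt_succ fun i => by have := h.2 i; have := h.1; linarith

lemma Grid.le {ξ : ℤ → ℝ} {δ : ℝ} (h : Grid ξ δ) {a b : ℤ} (hab : ξ a ≤ ξ b + 2 * δ) : a ≤ b := by
  by_contra hc
  have h1 : ξ (b + 1) ≤ ξ a := h.mono.monotone (by omega)
  have := h.2 b
  have := h.1
  linarith

lemma exists_between_lines {ξ : ℤ → ℝ} {δ : ℝ} (hδ : 0 ≤ δ) {c d : ℤ} (hcd : c < d) {w : ℝ}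
    (h1 : ξ c - δ ≤ w) (h2 : w ≤ ξ d + δ) :
    ∃ j, c ≤ j ∧ j < d ∧ ξ j - δ ≤ w ∧ w ≤ ξ (j + 1) + δ := by
  obtain ⟨n, rfl⟩ := Int.le.dest (show c + 1 ≤ d by omega)
  clear hcd
  induction n with
  | zero => exact ⟨c, le_rfl, by omega, h1, by simpa using h2⟩
  | succ n ih =>
    rcases le_total w (ξ (c + 1 + n)) with h | h
    · obtain ⟨j, a, b, e⟩ := ih (by linarith)
      exact ⟨j, a, by push_cast; omega, e⟩
    · refine ⟨c + 1 + n, by omega, by push_cast; omega, by linarith, ?_⟩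
      push_cast at h2
      rw [add_assoc (c + 1)]
      exact h2

lemma XX_runset {ξ : ℤ → ℝ} (hξ : Monotone ξ) {i c d : ℤ} (hcd : c < d) :
    XX ξ (runset i c d) = box (ξ i) (ξ (i + 1)) (ξ c) (ξ d) := by
  ext z
  constructor
  · rintro ⟨k, ⟨h1, h2, h3⟩, ⟨g1, g2, g3, g4⟩⟩
    subst h1
    have := hξ h2
    have := hξ (show k.2 + 1 ≤ d by omega)
    exact ⟨g1, g2, by linarith, by linarith⟩
  · rintro ⟨g1, g2, g3, g4⟩
    obtain ⟨j, h1, h2, h3, h4⟩ := exists_between_lines (δ := 0) le_rfl hcd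
      (by linarith : ξ c - 0 ≤ z.2) (by linarith)
    exact ⟨(i, j), ⟨rfl, h1, h2⟩, ⟨g1, g2, by simpa using h3, by simpa using h4⟩⟩

/-- a homeo supported in `N` preserves `N` -/
lemma supp_mem {α : Type*} {N : Set α} {Φ : α → α} (hinj : Function.Injective Φ)
    (h : ∀ z, z ∉ N → Φ z = z) {z : α} (hz : z ∈ N) : Φ z ∈ N := by
  by_contra hc
  exact hc ((hinj (h _ hc)).symm ▸ hz)

lemma step_core {ξ : ℤ → ℝ} {δ : ℝ} (hg : Grid ξ δ) {D : Set (ℤ × ℤ)} {i c d : ℤ}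
    (hR : IsRun D i c d) {W : Set (ℝ × ℝ)} {Φ : ℝ × ℝ ≃ₜ ℝ × ℝ}
    (h1 : ∀ z, z ∉ box (ξ i - δ) (ξ (i + 1) + δ) (ξ c - δ) (ξ d + δ) → Φ z = z)
    (h2 : ∀ z, Φ z ∈ W ↔ z ∈ box (ξ i) (ξ (i + 1)) (ξ c) (ξ d) ∪ W)
    (h3 : ∀ z ∈ box (ξ i - δ) (ξ (i + 1) + δ) (ξ c - δ) (ξ d + δ),
      (z ∈ XX ξ (D \ runset i c d) ↔ z ∈ W)) :
    (∀ z, Φ z ∈ XX ξ (D \ runset i c d) ↔ z ∈ XX ξ D) ∧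
    ∀ z, (∀ k ∈ runset i c d, z ∉ tcell ξ δ k) → Φ z = z := by
  have hδ := hg.1
  have hXD : ∀ z, z ∈ XX ξ D ↔ z ∈ box (ξ i) (ξ (i + 1)) (ξ c) (ξ d) ∪ XX ξ (D \ runset i c d) := by
    intro z
    rw [← XX_runset hg.mono.monotone hR.1]
    constructor
    · rintro ⟨k, hk, hz⟩
      by_cases hkr : k ∈ runset i c d
      · exact Or.inl ⟨k, hkr, hz⟩
      · exact Or.inr ⟨k, ⟨hk, hkr⟩, hz⟩
    · rintro (⟨k, hk, hz⟩ | ⟨k, hk, hz⟩)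
      · refine ⟨k, ?_, hz⟩
        have := hR.2.1 k.2 hk.2.1 hk.2.2
        rw [← hk.1] at this
        exact this
      · exact ⟨k, hk.1, hz⟩
  constructor
  · intro z
    rw [hXD]
    by_cases hz : z ∈ box (ξ i - δ) (ξ (i + 1) + δ) (ξ c - δ) (ξ d + δ)
    · have hz' := supp_mem Φ.injective h1 hz
      rw [h3 _ hz', h2, mem_union, mem_union, h3 _ hz]
    · rw [h1 z hz, mem_union]
      constructor
      · exact Or.inr
      · rintro (h | h)
        · obtain ⟨a1, a2, a3, a4⟩ := h
          exact absurd ⟨by linarith, by linarith, by linarith, by linarith⟩ hz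
        · exact h
  · intro z hz
    apply h1
    rintro ⟨a1, a2, a3, a4⟩
    obtain ⟨j, b1, b2, b3, b4⟩ := exists_between_lines hδ.le hR.1 a3 a4
    exact hz (i, j) ⟨rfl, b1, b2⟩ ⟨a1, a2, b3, b4⟩

lemma step {ξ : ℤ → ℝ} {δ : ℝ} (hg : Grid ξ δ) {D : Set (ℤ × ℤ)} {i i' c d e f l : ℤ}
    (hR : IsRun D i c d) (hL : IsRun D i' e f) (hi' : i' = i - 1 ∨ i' = i + 1)
    (hl1 : c ≤ l) (hl2 : l < d) (hl3 : e ≤ l) (hl4 : l < f)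
    (hnb : ∀ k ∈ D, i - 1 ≤ k.1 → k.1 ≤ i + 1 → c - 1 ≤ k.2 → k.2 ≤ d →
      k ∈ runset i c d ∨ k ∈ runset i' e f) :
    ∃ Φ : ℝ × ℝ ≃ₜ ℝ × ℝ, (∀ z, Φ z ∈ XX ξ (D \ runset i c d) ↔ z ∈ XX ξ D) ∧
      ∀ z, (∀ k ∈ runset i c d, z ∉ tcell ξ δ k) → Φ z = z := by
  have hδ := hg.1
  have hnb' : ∀ z ∈ box (ξ i - δ) (ξ (i + 1) + δ) (ξ c - δ) (ξ d + δ), ∀ k ∈ D \ runset i c d,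
      z ∈ cell ξ k → k ∈ runset i' e f := by
    rintro z ⟨a1, a2, a3, a4⟩ k hk ⟨b1, b2, b3, b4⟩
    have c1 := hg.le (show ξ i ≤ ξ (k.1 + 1) + 2 * δ by linarith)
    have c2 := hg.le (show ξ k.1 ≤ ξ (i + 1) + 2 * δ by linarith)
    have c3 := hg.le (show ξ c ≤ ξ (k.2 + 1) + 2 * δ by linarith)
    have c4 := hg.le (show ξ k.2 ≤ ξ d + 2 * δ by linarith)
    exact (hnb k hk.1 (by omega) (by omega) (by omega) (by omega)).resolve_left hk.2
  have hmem : ∀ j, e ≤ j → j < f → (i', j) ∈ D \ runset i c d := fun j h1 h2 =>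
    ⟨hL.2.1 j h1 h2, fun h => by have : i' = i := h.1; omega⟩
  have m1 := hg.mono (show i < i + 1 by omega)
  have m2 := hg.mono hR.1
  have m3 := hg.mono hL.1
  have m4 := hg.mono (show c < f by omega)
  have m5 := hg.mono (show e < d by omega)
  rcases hi' with hi | hi
  · obtain ⟨Φ, h1, h2⟩ := move_left m1 hδ m2 m3 m4 m5
    refine ⟨Φ, step_core hg hR h1 h2 fun z hz => ?_⟩
    constructor
    · rintro ⟨k, hk, hzk⟩
      have hz' : z ∈ XX ξ (runset i' e f) := ⟨k, hnb' z hz k hk hzk, hzk⟩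
      rw [XX_runset hg.mono.monotone hL.1, show i' + 1 = i by omega] at hz'
      exact ⟨hz'.2.1, hz'.2.2⟩
    · rintro ⟨g1, g2⟩
      have hz' : z ∈ XX ξ (runset i' e f) := by
        rw [XX_runset hg.mono.monotone hL.1, show i' + 1 = i by omega]
        have := hg.2 i'
        rw [show i' + 1 = i by omega] at this
        have := hz.1
        exact ⟨by linarith, g1, g2⟩
      obtain ⟨k, ⟨hk1, hk2⟩, hzk⟩ := hz'
      refine ⟨k, ?_, hzk⟩
      have := hmem k.2 hk2.1 hk2.2
      rw [← hk1] at this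
      exact this
  · obtain ⟨Φ, h1, h2⟩ := move_right m1 hδ m2 m3 m4 m5
    refine ⟨Φ, step_core hg hR h1 h2 fun z hz => ?_⟩
    constructor
    · rintro ⟨k, hk, hzk⟩
      have hz' : z ∈ XX ξ (runset i' e f) := ⟨k, hnb' z hz k hk hzk, hzk⟩
      rw [XX_runset hg.mono.monotone hL.1, hi] at hz'
      exact ⟨hz'.1, hz'.2.2⟩
    · rintro ⟨g1, g2⟩
      have hz' : z ∈ XX ξ (runset i' e f) := by
        rw [XX_runset hg.mono.monotone hL.1, hi]
        have := hg.2 (i + 1)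
        have := hz.2.1
        exact ⟨g1, by linarith, g2⟩
      obtain ⟨k, ⟨hk1, hk2⟩, hzk⟩ := hz'
      refine ⟨k, ?_, hzk⟩
      have := hmem k.2 hk2.1 hk2.2
      rw [← hk1] at this
      exact this

lemma vrun_mem {D : Set (ℤ × ℤ)} {i c d : ℤ} (hR : IsRun D i c d) {v : ℤ × ℤ}
    (hv : v ∈ runset i c d) : v ∈ D := by
  have := hR.2.1 v.2 hv.2.1 hv.2.2
  rw [← hv.1] at this
  exact this

/-- cells vertically next to a run are not in the set -/
lemma vrun_vert {D : Set (ℤ × ℤ)} {i c d : ℤ} (hR : IsRun D i c d) {v : ℤ × ℤ} (hv : v ∈ D)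
    (h1 : v.1 = i) (h2 : c - 1 ≤ v.2) (h3 : v.2 ≤ d) : v ∈ runset i c d := by
  obtain ⟨x, y⟩ := v
  dsimp only at h1 h2 h3
  subst h1
  refine ⟨rfl, ?_, ?_⟩
  · show c ≤ y
    by_contra hc
    rw [show y = c - 1 by omega] at hv
    exact hR.2.2.1 hv
  · show y < d
    by_contra hc
    rw [show y = d by omega] at hv
    exact hR.2.2.2 hv

lemma Rn_sdiff {D : Set (ℤ × ℤ)} {k k0 : ℤ × ℤ} (h : k ∉ Rn D k0) :
    Rn (D \ Rn D k) k0 = Rn D k0 := by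
  ext v
  constructor
  · rintro ⟨h1, h2⟩
    exact ⟨h1, fun j a b => (h2 j a b).1⟩
  · rintro ⟨h1, h2⟩
    refine ⟨h1, fun j a b => ⟨h2 j a b, fun hj => h ?_⟩⟩
    have : (k0.1, j) ∈ Rn D k0 := ⟨rfl, fun j' a' b' => h2 j' (by dsimp only at *; omega)
      (by dsimp only at *; omega)⟩
    exact Rn_trans this (Rn_symm hj)

lemma DT {ξ : ℤ → ℝ} {δ : ℝ} (hg : Grid ξ δ) (n : ℕ) : ∀ {D : Set (ℤ × ℤ)}, D.ncard ≤ n →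
    D.Finite → (∀ u ∈ D, ∀ v ∈ D, Conn4 D u v) → WC D → (∀ u ∉ D, ∀ v ∉ D, Conn8 Dᶜ u v) →
    ∀ {k0 : ℤ × ℤ}, k0 ∈ D →
    ∃ Φ : ℝ × ℝ ≃ₜ ℝ × ℝ, (∀ z, Φ z ∈ XX ξ (Rn D k0) ↔ z ∈ XX ξ D) ∧
      ∀ z, (∀ k ∈ D \ Rn D k0, z ∉ tcell ξ δ k) → Φ z = z := by
  induction n with
  | zero =>
    intro D hn hfin _ _ _ k0 hk0
    have := (Set.ncard_pos hfin).2 ⟨k0, hk0⟩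
    omega
  | succ n ih =>
    intro D hn hfin hconn hwc hco k0 hk0
    by_cases hne : ∃ k ∈ D, k ∉ Rn D k0
    swap
    · push Not at hne
      have : Rn D k0 = D := Subset.antisymm (fun v hv => Rn_mem hv) hne
      exact ⟨Homeomorph.refl _, fun z => by rw [this]; rfl, fun z _ => rfl⟩
    obtain ⟨k, hk, hkk0, hcut⟩ := exists_noncut hfin hconn hk0 hne
    obtain ⟨c, d, hR, hck, hkd⟩ := exists_run hfin hk
    have hRn := Rn_eq_runset hR hck hkd
    have hk0R : k0 ∉ Rn D k := fun h => hkk0 (Rn_symm h)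
    have hRn0 := Rn_sdiff hkk0
    rw [hRn] at hk0R hcut hRn0
    obtain ⟨i, j⟩ := k
    dsimp only at hR hck hkd hRn hk0R hcut hRn0
    -- existence of a horizontal neighbour
    obtain ⟨l, hl, hli, hlj⟩ : ∃ l ∈ D, (l.1 = i - 1 ∨ l.1 = i + 1) ∧ (c ≤ l.2 ∧ l.2 < d) := by
      by_contra hno
      push Not at hno
      have : ∀ v, Conn4 D (i, j) v → v ∈ runset i c d := by
        intro v hv
        induction hv with
        | refl => exact ⟨rfl, hck, hkd⟩
        | @tail b b' hb hs ih =>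
          obtain ⟨g1, g2, g3⟩ := ih
          have hadj := hs.1
          unfold adj4 at hadj
          by_cases hh : b'.1 = i
          · exact vrun_vert hR hs.2.2 hh (by omega) (by omega)
          · have := hno b' hs.2.2 (by omega) (by omega)
            omega
      exact hk0R (this k0 (hconn _ hk _ hk0))
    obtain ⟨e, f, hL, hel, hlf⟩ := exists_run hfin hl
    have hLn := Rn_eq_runset hL hel hlf
    have huniq : ∀ l2 ∈ D, (l2.1 = i - 1 ∨ l2.1 = i + 1) → c ≤ l2.2 → l2.2 < d →
        l2 ∈ runset l.1 e f := fun l2 h1 h2 h3 h4 => by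
      rw [← hLn]
      exact leaf_unique hfin hco hR hcut hl h1 hli hlj h2 ⟨h3, h4⟩
    have hnb : ∀ v ∈ D, i - 1 ≤ v.1 → v.1 ≤ i + 1 → c - 1 ≤ v.2 → v.2 ≤ d →
        v ∈ runset i c d ∨ v ∈ runset l.1 e f := by
      intro v hv h1 h2 h3 h4
      by_cases hvi : v.1 = i
      · exact Or.inl (vrun_vert hR hv hvi h3 h4)
      right
      have hvi' : v.1 = i - 1 ∨ v.1 = i + 1 := by omega
      by_cases hmid : c ≤ v.2 ∧ v.2 < d
      · exact huniq v hv hvi' hmid.1 hmid.2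
      obtain ⟨x, y⟩ := v
      dsimp only at hvi hvi' h1 h2 h3 h4 hmid
      have hc1 := hR.2.1 c le_rfl hR.1
      have hd1 := hR.2.1 (d - 1) (by have := hR.1; omega) (by omega)
      rcases (by omega : y = c - 1 ∨ y = d) with hy | hy
      · subst hy
        have hx : (x, c) ∈ D := by
          rcases hvi' with hx | hx
          · have h := (hwc x (c - 1)).1
            rw [show x + 1 = i by omega, show c - 1 + 1 = c by ring] at h
            exact (h hv hc1).resolve_left hR.2.2.1
          · have h := (hwc i (c - 1)).2
            rw [show i + 1 = x by omega, show c - 1 + 1 = c by ring] at h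
            exact (h hv hc1).resolve_left hR.2.2.1
        have hx' := huniq (x, c) hx hvi' le_rfl hR.1
        obtain ⟨g1, g2, g3⟩ := hx'
        exact vrun_vert hL hv g1 (by dsimp only at *; omega) (by dsimp only at *; omega)
      · subst hy
        have hx : (x, y - 1) ∈ D := by
          rcases hvi' with hx | hx
          · have h := (hwc x (y - 1)).2
            rw [show x + 1 = i by omega, show y - 1 + 1 = y by ring] at h
            exact (h hd1 hv).resolve_right hR.2.2.2
          · have h := (hwc i (y - 1)).1
            rw [show i + 1 = x by omega, show y - 1 + 1 = y by ring] at h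
            exact (h hd1 hv).resolve_right hR.2.2.2
        have hx' := huniq (x, y - 1) hx hvi' (by have := hR.1; dsimp only; omega)
          (by dsimp only; omega)
        obtain ⟨g1, g2, g3⟩ := hx'
        exact vrun_vert hL hv g1 (by dsimp only at *; omega) (by dsimp only at *; omega)
    obtain ⟨Φ, hΦ1, hΦ2⟩ := step hg hR hL hli hlj.1 hlj.2 hel hlf hnb
    have hss : D \ runset i c d ⊂ D :=
      ⟨sdiff_subset, fun h => (h hk).2 ⟨rfl, hck, hkd⟩⟩
    have hcard := Set.ncard_lt_ncard hss hfin
    have hwc' : WC (D \ runset i c d) := by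
      have hup : ∀ x y, (x, y) ∈ D → (x, y) ∉ runset i c d → (x, y + 1) ∈ D →
          (x, y + 1) ∉ runset i c d := fun x y h1 h2 h3 h4 => h2 (vrun_vert hR h1 h4.1
          (by have : c ≤ y + 1 := h4.2.1; dsimp only; omega)
          (by have : y + 1 < d := h4.2.2; dsimp only; omega))
      have hdn : ∀ x y, (x, y + 1) ∈ D → (x, y + 1) ∉ runset i c d → (x, y) ∈ D →
          (x, y) ∉ runset i c d := fun x y h1 h2 h3 h4 => h2 (vrun_vert hR h1 h4.1
          (by have : c ≤ y := h4.2.1; dsimp only; omega)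
          (by have : y < d := h4.2.2; dsimp only; omega))
      intro x y
      constructor
      · intro h1 h2
        rcases (hwc x y).1 h1.1 h2.1 with h | h
        · exact Or.inl ⟨h, hdn _ _ h2.1 h2.2 h⟩
        · exact Or.inr ⟨h, hup _ _ h1.1 h1.2 h⟩
      · intro h1 h2
        rcases (hwc x y).2 h1.1 h2.1 with h | h
        · exact Or.inl ⟨h, hdn _ _ h2.1 h2.2 h⟩
        · exact Or.inr ⟨h, hup _ _ h1.1 h1.2 h⟩
    have hco' : ∀ u ∉ D \ runset i c d, ∀ v ∉ D \ runset i c d,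
        Conn8 (D \ runset i c d)ᶜ u v := by
      have hs1 : Dᶜ ⊆ (D \ runset i c d)ᶜ := compl_subset_compl.2 sdiff_subset
      have key : ∀ u ∉ D \ runset i c d, Conn8 (D \ runset i c d)ᶜ u (i, d) := by
        intro u hu
        by_cases huD : u ∈ D
        · have hur : u ∈ runset i c d := by_contra fun h => hu ⟨huD, h⟩
          obtain ⟨x, y⟩ := u
          obtain ⟨g1, g2, g3⟩ := hur
          dsimp only at g1 g2 g3
          subst g1
          apply Conn4.conn8
          apply conn4_vert
          intro j' h1 h2 h3
          by_cases hjd : j' = d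
          · rw [hjd] at h3
            exact hR.2.2.2 h3.1
          · exact h3.2 ⟨rfl, by show c ≤ j'; omega, by show j' < d; omega⟩
        · exact (hco u huD _ hR.2.2.2).mono hs1
      exact fun u hu v hv => (key u hu).trans (key v hv).symm
    obtain ⟨Ψ, hΨ1, hΨ2⟩ := ih (by omega) (hfin.subset sdiff_subset) hcut hwc' hco'
      (k0 := k0) ⟨hk0, hk0R⟩
    rw [hRn0] at hΨ1 hΨ2
    refine ⟨Φ.trans Ψ, fun z => ?_, fun z hz => ?_⟩
    · rw [Homeomorph.trans_apply, hΨ1, hΦ1]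
    · have hrr : ∀ v ∈ runset i c d, v ∈ D \ Rn D k0 := fun v hv =>
        ⟨vrun_mem hR hv, fun h => by rw [← hRn] at hv; exact hkk0 (Rn_trans h (Rn_symm hv))⟩
      rw [Homeomorph.trans_apply, hΦ2 z (fun v hv => hz v (hrr v hv)),
        hΨ2 z (fun v hv => hz v ⟨hv.1.1, hv.2⟩)]

lemma conn4_univ (u v : ℤ × ℤ) : Conn4 univ u v :=
  (conn4_vert (i := u.1) (a := u.2) (b := v.2) fun _ _ _ => mem_univ _).trans
    (conn4_horiz (j := v.2) (a := u.1) (b := v.1) fun _ _ _ => mem_univ _)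

/-- every outside cell can be walked to the boundary of `S` -/
lemma walk {S : Set (ℤ × ℤ)} {s0 : ℤ × ℤ} (hs0 : s0 ∈ S) {t : ℤ × ℤ} (ht : t ∉ S) :
    ∃ t' s, t' ∉ S ∧ s ∈ S ∧ adj4 t' s ∧ Conn8 Sᶜ t t' := by
  by_contra hno
  push Not at hno
  have : ∀ v, Conn4 univ t v → v ∉ S ∧ Conn8 Sᶜ t v := by
    intro v hv
    induction hv with
    | refl => exact ⟨ht, Conn8.refl _⟩
    | @tail b b' hb hs ih =>
      have hb' : b' ∉ S := fun h => hno b b' ih.1 h hs.1 ih.2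
      exact ⟨hb', ih.2.trans (Conn8.single hs.1.adj8 ih.1 hb')⟩
  exact (this s0 (conn4_univ _ _)).1 hs0

lemma far_conn {S : Set (ℤ × ℤ)} {M : ℤ} (hM : 0 < M)
    (hb : ∀ k ∈ S, -M < k.1 ∧ k.1 < M ∧ -M < k.2 ∧ k.2 < M) {k : ℤ × ℤ}
    (hk : ¬ (-M < k.1 ∧ k.1 < M ∧ -M < k.2 ∧ k.2 < M)) : Conn8 Sᶜ (M, M) k := by
  have hb' : ∀ x y, (M ≤ x ∨ x ≤ -M ∨ M ≤ y ∨ y ≤ -M) → (x, y) ∈ Sᶜ := by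
    intro x y h hS
    have h1 : -M < x ∧ x < M ∧ -M < y ∧ y < M := hb _ hS
    omega
  obtain ⟨x, y⟩ := k
  dsimp only at hk
  apply Conn4.conn8
  rcases (by omega : (M ≤ x ∨ x ≤ -M) ∨ (M ≤ y ∨ y ≤ -M)) with h | h
  · exact (conn4_horiz fun i _ _ => hb' _ _ (by omega)).trans
      (conn4_vert (i := x) (a := M) (b := y) fun i _ _ => hb' _ _ (by omega))
  · exact (conn4_vert fun i _ _ => hb' _ _ (by omega)).trans
      (conn4_horiz (j := y) (a := M) (b := x) fun i _ _ => hb' _ _ (by omega))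

lemma conn8_class {E : Set (ℤ × ℤ)} {a b : ℤ × ℤ} (h : Conn8 E a b) :
    Conn8 {t | Conn8 E a t} a b := by
  induction h with
  | refl => exact Conn8.refl _
  | @tail b b' hb hs ih => exact ih.tail ⟨hs.1, hb, hb.tail hs⟩

/-- corner-adjacent cells outside a `WC` set are joined by edges outside it -/
lemma wc_compl {S : Set (ℤ × ℤ)} (hwc : WC S) {u v : ℤ × ℤ} (hu : u ∉ S) (hv : v ∉ S)
    (h : adj8 u v) : u = v ∨ adj4 u v ∨ ∃ w, w ∉ S ∧ adj4 u w ∧ adj4 w v := by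
  obtain ⟨x, y⟩ := u
  obtain ⟨x', y'⟩ := v
  simp only [adj8] at h
  have c := hwc (min x x') (min y y')
  by_cases hx : x = x'
  · by_cases hy : y = y'
    · left; rw [hx, hy]
    · right; left; left; exact ⟨hx, by dsimp only; omega⟩
  by_cases hy : y = y'
  · right; left; right; exact ⟨hy, by dsimp only; omega⟩
  right; right
  have a1 : adj4 (x, y) (x', y) := Or.inr ⟨rfl, by dsimp only; omega⟩
  have a2 : adj4 (x', y) (x', y') := Or.inl ⟨rfl, by dsimp only; omega⟩
  have a3 : adj4 (x, y) (x, y') := Or.inl ⟨rfl, by dsimp only; omega⟩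
  have a4 : adj4 (x, y') (x', y') := Or.inr ⟨rfl, by dsimp only; omega⟩
  by_contra hno
  push Not at hno
  have b1 : (x', y) ∈ S := by_contra fun h => hno _ h a1 a2
  have b2 : (x, y') ∈ S := by_contra fun h => hno _ h a3 a4
  rcases (by omega : x' = x + 1 ∨ x = x' + 1) with h1 | h1 <;>
    rcases (by omega : y' = y + 1 ∨ y = y' + 1) with h2 | h2
  · rw [min_eq_left (by omega), min_eq_left (by omega), ← h1, ← h2] at c
    exact (c.2 b1 b2).elim hu hv
  · rw [min_eq_left (by omega), min_eq_right (by omega), ← h1, ← h2] at c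
    exact (c.1 b2 b1).elim hv hu
  · rw [min_eq_right (by omega), min_eq_left (by omega), ← h1, ← h2] at c
    exact (c.1 b1 b2).elim hu hv
  · rw [min_eq_right (by omega), min_eq_right (by omega), ← h1, ← h2] at c
    exact (c.2 b2 b1).elim hv hu

/-- package of hypotheses for a digital disk -/
structure DDisk (D : Set (ℤ × ℤ)) : Prop where
  fin : D.Finite
  conn : ∀ u ∈ D, ∀ v ∈ D, Conn4 D u v
  wc : WC D
  co : ∀ u ∉ D, ∀ v ∉ D, Conn8 Dᶜ u v

lemma comb_core {S : Set (ℤ × ℤ)} (hfin : S.Finite) {s0 : ℤ × ℤ} (hs0 : s0 ∈ S)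
    (hconn : ∀ u ∈ S, ∀ v ∈ S, Conn4 S u v) (hwc : WC S)
    (hT : ∀ a ∉ S, ∀ b ∉ S, ∀ c ∉ S, Conn8 Sᶜ a b ∨ Conn8 Sᶜ a c ∨ Conn8 Sᶜ b c) :
    DDisk S ∨ ∃ H : Set (ℤ × ℤ), H.Nonempty ∧ DDisk H ∧ DDisk (S ∪ H) ∧ Disjoint S H ∧
      ∀ k ∈ H, ∀ k', adj8 k k' → k' ∈ S ∪ H := by
  obtain ⟨M, hM, hb⟩ := finite_bdd hfin
  obtain ⟨o, ho⟩ : ∃ o : ℤ × ℤ, o = (M, M) := ⟨_, rfl⟩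
  have hoS : o ∉ S := fun h => by have := hb o h; rw [ho] at this; simp at this
  have hfar : ∀ k : ℤ × ℤ, ¬ Conn8 Sᶜ o k → -M < k.1 ∧ k.1 < M ∧ -M < k.2 ∧ k.2 < M := by
    intro k hk
    by_contra hc
    rw [ho] at hk
    exact hk (far_conn hM hb hc)
  by_cases hall : ∀ t ∉ S, Conn8 Sᶜ o t
  · left
    exact ⟨hfin, hconn, hwc, fun u hu v hv => (hall u hu).symm.trans (hall v hv)⟩
  right
  push Not at hall
  obtain ⟨t2, ht2, hot2⟩ := hall
  obtain ⟨H, hH⟩ : ∃ H : Set (ℤ × ℤ), H = {t | Conn8 Sᶜ t2 t} := ⟨_, rfl⟩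
  have hHm : ∀ t, t ∈ H ↔ Conn8 Sᶜ t2 t := fun t => by rw [hH]; rfl
  have hHS : ∀ t ∈ H, t ∉ S := fun t ht => ((hHm t).1 ht).mem (D := Sᶜ) ht2
  have ht2H : t2 ∈ H := (hHm _).2 (Conn8.refl _)
  have hHo : ∀ t ∈ H, ¬ Conn8 Sᶜ o t := fun t ht h => hot2 (h.trans ((hHm t).1 ht).symm)
  have hclass : ∀ t ∉ S, t ∉ H → Conn8 Sᶜ o t := by
    intro t ht htH
    rcases hT o hoS t2 ht2 t ht with h | h | h
    · exact absurd h hot2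
    · exact h
    · exact absurd ((hHm t).2 h) htH
  have hHadj : ∀ k ∈ H, ∀ k', adj8 k k' → k' ∉ S → k' ∈ H := fun k hk k' ha hk' =>
    (hHm _).2 (((hHm k).1 hk).trans (Conn8.single ha (hHS k hk) hk'))
  have hHfin : H.Finite := by
    refine Set.Finite.subset ((Set.finite_Icc (-M) M).prod (Set.finite_Icc (-M) M)) ?_
    intro k hk
    have := hfar k (hHo k hk)
    exact ⟨⟨by omega, by omega⟩, ⟨by omega, by omega⟩⟩
  have hHconn' : ∀ v, Conn8 Sᶜ t2 v → Conn4 H t2 v := by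
    intro v hv
    induction hv with
    | refl => exact Conn4.refl _
    | @tail b b' hb hs ih =>
      refine ih.trans ?_
      have hbH : b ∈ H := (hHm _).2 hb
      have hbH' : b' ∈ H := (hHm _).2 (hb.tail hs)
      rcases wc_compl hwc hs.2.1 hs.2.2 hs.1 with h | h | ⟨w, h1, h2, h3⟩
      · rw [h]; exact Conn4.refl _
      · exact Conn4.single h hbH hbH'
      · have hw : w ∈ H := hHadj b hbH w h2.adj8 h1
        exact (Conn4.single h2 hbH hw).trans (Conn4.single h3 hw hbH')
  have hHconn : ∀ u ∈ H, ∀ v ∈ H, Conn4 H u v := fun u hu v hv =>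
    (hHconn' u ((hHm u).1 hu)).symm.trans (hHconn' v ((hHm v).1 hv))
  have hHwc : WC H := by
    intro x y
    constructor
    · intro h1 h2
      by_contra hno
      push Not at hno
      have b1 : (x + 1, y) ∈ S := by_contra fun h => hno.1 (hHadj _ h1 _
        (by simp only [adj8]; omega) h)
      have b2 : (x, y + 1) ∈ S := by_contra fun h => hno.2 (hHadj _ h1 _
        (by simp only [adj8]; omega) h)
      exact ((hwc x y).2 b1 b2).elim (hHS _ h1) (hHS _ h2)
    · intro h1 h2
      by_contra hno
      push Not at hno
      have b1 : (x, y) ∈ S := by_contra fun h => hno.1 (hHadj _ h1 _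
        (by simp only [adj8]; omega) h)
      have b2 : (x + 1, y + 1) ∈ S := by_contra fun h => hno.2 (hHadj _ h1 _
        (by simp only [adj8]; omega) h)
      exact ((hwc x y).1 b1 b2).elim (hHS _ h1) (hHS _ h2)
  -- the outer component
  have hO : ∀ t, t ∉ S ∪ H ↔ Conn8 Sᶜ o t := by
    intro t
    constructor
    · intro h; exact hclass t (fun h' => h (Or.inl h')) (fun h' => h (Or.inr h'))
    · rintro h (h' | h')
      · exact h.mem (D := Sᶜ) hoS h'
      · exact hHo t h' h
  have hDc : (S ∪ H)ᶜ = {t | Conn8 Sᶜ o t} := by ext t; exact hO t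
  have hDco : ∀ u ∉ S ∪ H, ∀ v ∉ S ∪ H, Conn8 (S ∪ H)ᶜ u v := by
    intro u hu v hv
    rw [hDc]
    exact (conn8_class ((hO u).1 hu)).symm.trans (conn8_class ((hO v).1 hv))
  have hHco : ∀ u ∉ H, ∀ v ∉ H, Conn8 Hᶜ u v := by
    obtain ⟨t', s, ht', hs, hadj, hc⟩ := walk hs0 hoS
    have hs1 : S ⊆ Hᶜ := fun x hx hx' => hHS x hx' hx
    have hs2 : (S ∪ H)ᶜ ⊆ Hᶜ := fun x hx hx' => hx (Or.inr hx')
    have key : ∀ u ∉ H, Conn8 Hᶜ s u := by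
      intro u hu
      by_cases huS : u ∈ S
      · exact (hconn s hs u huS).conn8.mono hs1
      · have ht'O := (hO t').2 hc
        have huO : u ∉ S ∪ H := fun h => h.elim huS hu
        exact (Conn8.single hadj.symm.adj8 (hs1 hs) (hs2 ht'O)).trans
          ((hDco t' ht'O u huO).mono hs2)
    exact fun u hu v hv => (key u hu).symm.trans (key v hv)
  have hDconn : ∀ u ∈ S ∪ H, ∀ v ∈ S ∪ H, Conn4 (S ∪ H) u v := by
    obtain ⟨t', s, ht', hs, hadj, hc⟩ := walk hs0 ht2
    have ht'H : t' ∈ H := (hHm _).2 hc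
    have key : ∀ u ∈ S ∪ H, Conn4 (S ∪ H) s u := by
      rintro u (hu | hu)
      · exact (hconn s hs u hu).mono subset_union_left
      · exact (Conn4.single hadj.symm (Or.inl hs) (Or.inr ht'H)).trans
          ((hHconn t' ht'H u hu).mono subset_union_right)
    exact fun u hu v hv => (key u hu).symm.trans (key v hv)
  have hnbD : ∀ k ∈ H, ∀ k', adj8 k k' → k' ∈ S ∪ H := by
    intro k hk k' ha
    by_cases h : k' ∈ S
    · exact Or.inl h
    · exact Or.inr (hHadj k hk k' ha h)
  have hDwc : WC (S ∪ H) := by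
    intro x y
    constructor
    · intro h1 h2
      by_contra hno
      push Not at hno
      have a1 : (x, y) ∈ S := h1.resolve_right fun h => hno.1 (hnbD _ h _
        (by simp only [adj8]; omega))
      have a2 : (x + 1, y + 1) ∈ S := h2.resolve_right fun h => hno.1 (hnbD _ h _
        (by simp only [adj8]; omega))
      exact ((hwc x y).1 a1 a2).elim (fun h => hno.1 (Or.inl h)) (fun h => hno.2 (Or.inl h))
    · intro h1 h2
      by_contra hno
      push Not at hno
      have a1 : (x + 1, y) ∈ S := h1.resolve_right fun h => hno.1 (hnbD _ h _
        (by simp only [adj8]; omega))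
      have a2 : (x, y + 1) ∈ S := h2.resolve_right fun h => hno.1 (hnbD _ h _
        (by simp only [adj8]; omega))
      exact ((hwc x y).2 a1 a2).elim (fun h => hno.1 (Or.inl h)) (fun h => hno.2 (Or.inl h))
  exact ⟨H, ⟨t2, ht2H⟩, ⟨hHfin, hHconn, hHwc, hHco⟩, ⟨hfin.union hHfin, hDconn, hDwc, hDco⟩,
    Set.disjoint_left.2 fun x hx hx' => hHS x hx' hx, hnbD⟩

lemma exists_normHomeo : ∃ Θ : ℝ × ℝ ≃ₜ EuclideanSpace ℝ (Fin 2), ∀ z, ‖Θ z‖ = ‖z‖ := by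
  let Λ : (ℝ × ℝ) ≃L[ℝ] EuclideanSpace ℝ (Fin 2) :=
    (ContinuousLinearEquiv.finTwoArrow ℝ ℝ).symm.trans (EuclideanSpace.equiv (Fin 2) ℝ).symm
  let p : Seminorm ℝ (ℝ × ℝ) := (normSeminorm ℝ (EuclideanSpace ℝ (Fin 2))).comp Λ.toLinearMap
  have hp : ∀ z, p z = ‖Λ z‖ := fun z => rfl
  have hball : p.ball 0 1 = Λ ⁻¹' (ball 0 1) := by
    ext z
    rw [Seminorm.mem_ball, sub_zero, hp, mem_preimage, mem_ball_zero_iff]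
  have hgt : ∀ z, gauge (p.ball 0 1) z = ‖Λ z‖ := fun z => by rw [Seminorm.gauge_ball]; exact hp z
  have hc : Convex ℝ (p.ball 0 1) := p.convex_ball 0 1
  have h0 : p.ball 0 1 ∈ nhds (0 : ℝ × ℝ) := by
    rw [hball]
    exact Λ.continuous.continuousAt.preimage_mem_nhds (by rw [map_zero]; exact ball_mem_nhds _ one_pos)
  have hb : Bornology.IsVonNBounded ℝ (p.ball 0 1) := by
    rw [NormedSpace.isVonNBounded_iff, hball]
    have h := Λ.symm.lipschitz.isBounded_image (isBounded_ball (x := (0 : EuclideanSpace ℝ (Fin 2))) (r := 1))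
    refine h.subset fun z hz => ⟨Λ z, hz, by simp⟩
  have hc' : Convex ℝ (ball (0 : ℝ × ℝ) 1) := convex_ball _ _
  have h0' : ball (0 : ℝ × ℝ) 1 ∈ nhds (0 : ℝ × ℝ) := ball_mem_nhds _ one_pos
  have hb' : Bornology.IsVonNBounded ℝ (ball (0 : ℝ × ℝ) 1) :=
    (NormedSpace.isVonNBounded_iff ℝ).2 isBounded_ball
  refine ⟨(gaugeRescaleHomeomorph _ _ hc' h0' hb' hc h0 hb).trans Λ.toHomeomorph, fun z => ?_⟩
  show ‖Λ (gaugeRescale (ball 0 1) (p.ball 0 1) z)‖ = ‖z‖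
  rw [← hgt, gauge_gaugeRescale _ (absorbent_nhds_zero h0) hb, gauge_unit_ball]

lemma exists_line1 {a b : ℝ} (hab : a < b) :
    ∃ e : ℝ ≃ₜ ℝ, StrictMono e ∧ e a = -1 ∧ e b = 1 := by
  have h : 0 < b - a := by linarith
  have h' : 0 < 2 / (b - a) := by positivity
  refine ⟨affineHomeomorph (2 / (b - a)) (-1 - 2 / (b - a) * a) h'.ne', ?_, ?_, ?_⟩
  · intro x y hxy
    simp only [affineHomeomorph_apply]
    have := mul_lt_mul_of_pos_left hxy h'
    linarith
  · simp only [affineHomeomorph_apply]; ring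
  · simp only [affineHomeomorph_apply]; field_simp; ring

lemma exists_line2 {a a' b' b : ℝ} (h1 : a < a') (h2 : a' < b') (h3 : b' < b) :
    ∃ e : ℝ ≃ₜ ℝ, StrictMono e ∧ e a = -2 ∧ e a' = -1 ∧ e b' = 1 ∧ e b = 2 := by
  obtain ⟨e0, m0, ha0, hb0⟩ := exists_line1 (h1.trans (h2.trans h3))
  have hd : StrictMono (Homeomorph.mulLeft₀ (2 : ℝ) two_ne_zero) := fun x y h => by
    simp only [Homeomorph.coe_mulLeft₀]; linarith
  obtain ⟨e1, he1⟩ : ∃ e1 : ℝ ≃ₜ ℝ, e1 = e0.trans (Homeomorph.mulLeft₀ (2 : ℝ) two_ne_zero) :=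
    ⟨_, rfl⟩
  have m1 : StrictMono e1 := by rw [he1]; exact hd.comp m0
  have ha1 : e1 a = -2 := by rw [he1]; simp [ha0]
  have hb1 : e1 b = 2 := by rw [he1]; simp [hb0]
  have p1 := m1 h1
  have p2 := m1 h2
  have p3 := m1 h3
  rw [ha1] at p1
  rw [hb1] at p3
  have q1 : min (e1 a') (-1) ≤ -1 := min_le_right _ _
  have q2 : min (e1 a') (-1) ≤ e1 a' := min_le_left _ _
  have q3 : -2 < min (e1 a') (-1) := lt_min p1 (by norm_num)
  obtain ⟨f1, n1, o1, f1p⟩ := exists_plm_homeo p1 p2 q3 (q2.trans_lt p2)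
  obtain ⟨f2, n2, o2, f2p⟩ := exists_plm_homeo (q' := 1) (q2.trans_lt p2) p3
    (by linarith) (by norm_num)
  obtain ⟨f3, n3, o3, f3p⟩ := exists_plm_homeo (p := -2) (r := 1) (q := min (e1 a') (-1)) (q' := -1)
    q3 (by linarith) (by norm_num) (by norm_num)
  refine ⟨((e1.trans f1).trans f2).trans f3, ((n3.comp n2).comp n1).comp m1, ?_, ?_, ?_, ?_⟩
  · simp only [Homeomorph.trans_apply]
    rw [ha1, o1 _ (Or.inl le_rfl), o2 _ (Or.inl q3.le), o3 _ (Or.inl le_rfl)]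
  · simp only [Homeomorph.trans_apply]
    rw [f1p, o2 _ (Or.inl le_rfl), f3p]
  · simp only [Homeomorph.trans_apply]
    rw [o1 _ (Or.inr le_rfl), f2p, o3 _ (Or.inr le_rfl)]
  · simp only [Homeomorph.trans_apply]
    rw [hb1, o1 _ (Or.inr p3.le), o2 _ (Or.inr le_rfl), o3 _ (Or.inr (by norm_num))]

lemma box_norm (r : ℝ) : box (-r) r (-r) r = closedBall (0 : ℝ × ℝ) r := by
  ext ⟨x, y⟩
  rw [mem_closedBall_zero_iff, Prod.norm_def, max_le_iff, Real.norm_eq_abs, Real.norm_eq_abs,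
    abs_le, abs_le]
  exact ⟨fun h => ⟨⟨h.1, h.2.1⟩, h.2.2⟩, fun h => ⟨h.1.1, h.1.2, h.2⟩⟩

lemma prod_box {e f : ℝ ≃ₜ ℝ} (he : StrictMono e) (hf : StrictMono f) (a b c d : ℝ) (z : ℝ × ℝ) :
    (e.prodCongr f) z ∈ box (e a) (e b) (f c) (f d) ↔ z ∈ box a b c d := by
  show (e a ≤ e z.1 ∧ e z.1 ≤ e b ∧ f c ≤ f z.2 ∧ f z.2 ≤ f d) ↔
    (a ≤ z.1 ∧ z.1 ≤ b ∧ c ≤ z.2 ∧ z.2 ≤ d)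
  simp only [he.le_iff_le, hf.le_iff_le]

lemma homeo_interior {α β : Type*} [TopologicalSpace α] [TopologicalSpace β] (Φ : α ≃ₜ β)
    {A : Set α} {B : Set β} (h : ∀ z, Φ z ∈ B ↔ z ∈ A) (z : α) :
    Φ z ∈ interior B ↔ z ∈ interior A := by
  have : A = Φ ⁻¹' B := by ext z; exact (h z).symm
  rw [this, ← Homeomorph.preimage_interior]; rfl

lemma rect_disk {a b c d : ℝ} (hab : a < b) (hcd : c < d) :
    ∃ Θ : ℝ × ℝ ≃ₜ EuclideanSpace ℝ (Fin 2), ∀ z, Θ z ∈ closedBall 0 1 ↔ z ∈ box a b c d := by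
  obtain ⟨e, me, e1, e2⟩ := exists_line1 hab
  obtain ⟨f, mf, f1, f2⟩ := exists_line1 hcd
  obtain ⟨Θ, hΘ⟩ := exists_normHomeo
  refine ⟨(e.prodCongr f).trans Θ, fun z => ?_⟩
  rw [← prod_box me mf, e1, e2, f1, f2, box_norm, Homeomorph.trans_apply, mem_closedBall_zero_iff,
    mem_closedBall_zero_iff, hΘ]

lemma rect_annulus {a a' b' b c c' d' d : ℝ} (h1 : a < a') (h2 : a' < b') (h3 : b' < b)
    (h4 : c < c') (h5 : c' < d') (h6 : d' < d) :
    ∃ Θ : ℝ × ℝ ≃ₜ EuclideanSpace ℝ (Fin 2), ∀ z, Θ z ∈ {x | 1 ≤ ‖x‖ ∧ ‖x‖ ≤ 2} ↔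
      z ∈ box a b c d \ interior (box a' b' c' d') := by
  obtain ⟨e, me, e1, e2, e3, e4⟩ := exists_line2 h1 h2 h3
  obtain ⟨f, mf, f1, f2, f3, f4⟩ := exists_line2 h4 h5 h6
  obtain ⟨Θ, hΘ⟩ := exists_normHomeo
  refine ⟨(e.prodCongr f).trans Θ, fun z => ?_⟩
  rw [mem_sdiff, ← homeo_interior _ (prod_box me mf a' b' c' d'), ← prod_box me mf, e1, e2, e3, e4,
    f1, f2, f3, f4, box_norm, box_norm, interior_closedBall _ one_ne_zero, Homeomorph.trans_apply,
    mem_closedBall_zero_iff, mem_ball_zero_iff, mem_ofPred_eq, hΘ, not_lt, and_comm]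

/-- shrink a box horizontally -/
lemma shrink {a a' b' b c d δ : ℝ} (h1 : a < a') (h2 : a' < b') (h3 : b' < b) (hcd : c < d)
    (hδ : 0 < δ) :
    ∃ Φ : ℝ × ℝ ≃ₜ ℝ × ℝ, (∀ z, z ∉ box (a - δ) (b + δ) (c - δ) (d + δ) → Φ z = z) ∧
      ∀ z, Φ z ∈ box a' b' c d ↔ z ∈ box a b c d := by
  obtain ⟨δ', k1, k2, k3, k4⟩ : ∃ δ', 0 < δ' ∧ δ' ≤ δ ∧ δ' < a' - a ∧ δ' < b' - a' := by
    refine ⟨min δ (min ((a' - a) / 2) ((b' - a') / 2)), ?_, min_le_left _ _, ?_, ?_⟩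
    · exact lt_min hδ (lt_min (by linarith) (by linarith))
    · exact ((min_le_right _ _).trans (min_le_left _ _)).trans_lt (by linarith)
    · exact ((min_le_right _ _).trans (min_le_right _ _)).trans_lt (by linarith)
  obtain ⟨Φ, hΦ1, hΦ2⟩ := move_left h3 k1 hcd hcd hcd hcd
  obtain ⟨Ψ, hΨ1, hΨ2⟩ := move_right h1 k1 hcd hcd hcd hcd
  have A : ∀ z, Φ z ∈ box a b' c d ↔ z ∈ box a b c d := by
    intro z
    by_cases hz : z ∈ box (b' - δ') (b + δ') (c - δ') (d + δ')
    · have hz' := supp_mem Φ.injective hΦ1 hz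
      have := hΦ2 z
      constructor
      · intro h
        rcases this.1 ⟨h.2.1, h.2.2⟩ with g | g
        · exact ⟨by have := g.1; linarith, g.2⟩
        · exact ⟨by have := hz.1; linarith, by have := g.1; linarith, g.2⟩
      · intro h
        have hm : z ∈ box b' b c d ∪ lstrip b' c d := by
          rcases le_total z.1 b' with g | g
          · exact Or.inr ⟨g, h.2.2⟩
          · exact Or.inl ⟨g, h.2⟩
        have := this.2 hm
        exact ⟨by have := hz'.1; linarith, this⟩
    · rw [hΦ1 z hz]
      constructor
      · intro h; exact ⟨h.1, by have := h.2.1; linarith, h.2.2⟩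
      · intro h
        refine ⟨h.1, ?_, h.2.2⟩
        by_contra hc
        obtain ⟨g1, g2, g3, g4⟩ := h
        exact hz ⟨by linarith, by linarith, by linarith, by linarith⟩
  have B : ∀ z, Ψ z ∈ box a' b' c d ↔ z ∈ box a b' c d := by
    intro z
    by_cases hz : z ∈ box (a - δ') (a' + δ') (c - δ') (d + δ')
    · have hz' := supp_mem Ψ.injective hΨ1 hz
      have := hΨ2 z
      constructor
      · intro h
        rcases this.1 ⟨h.1, h.2.2⟩ with g | g
        · exact ⟨g.1, by have := g.2.1; linarith, g.2.2⟩
        · exact ⟨by have := g.1; linarith, by have := hz.2.1; linarith, g.2⟩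
      · intro h
        have hm : z ∈ box a a' c d ∪ rstrip a' c d := by
          rcases le_total z.1 a' with g | g
          · exact Or.inl ⟨h.1, g, h.2.2⟩
          · exact Or.inr ⟨g, h.2.2⟩
        have := this.2 hm
        exact ⟨this.1, by have := hz'.2.1; linarith, this.2⟩
    · rw [hΨ1 z hz]
      constructor
      · intro h; exact ⟨by have := h.1; linarith, h.2⟩
      · intro h
        refine ⟨?_, h.2⟩
        by_contra hc
        obtain ⟨g1, g2, g3, g4⟩ := h
        exact hz ⟨by linarith, by linarith, by linarith, by linarith⟩
  refine ⟨Φ.trans Ψ, fun z hz => ?_, fun z => ?_⟩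
  · have w1 : Φ z = z := hΦ1 z fun h => hz ⟨by have := h.1; linarith, by have := h.2.1; linarith,
      by have := h.2.2.1; linarith, by have := h.2.2.2; linarith⟩
    rw [Homeomorph.trans_apply, w1]
    exact hΨ1 z fun h => hz ⟨by have := h.1; linarith, by have := h.2.1; linarith,
      by have := h.2.2.1; linarith, by have := h.2.2.2; linarith⟩
  · rw [Homeomorph.trans_apply, B, A]

/-- open grid cell -/
def ocell (ξ : ℤ → ℝ) (k : ℤ × ℤ) : Set (ℝ × ℝ) := Ioo (ξ k.1) (ξ (k.1 + 1)) ×ˢ Ioo (ξ k.2) (ξ (k.2 + 1))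

lemma cell_eq (ξ : ℤ → ℝ) (k : ℤ × ℤ) :
    cell ξ k = Icc (ξ k.1) (ξ (k.1 + 1)) ×ˢ Icc (ξ k.2) (ξ (k.2 + 1)) := by
  ext z
  exact ⟨fun h => ⟨⟨h.1, h.2.1⟩, h.2.2⟩, fun h => ⟨h.1.1, h.1.2, h.2⟩⟩

lemma closure_ocell {ξ : ℤ → ℝ} (hξ : StrictMono ξ) (k : ℤ × ℤ) : closure (ocell ξ k) = cell ξ k := by
  rw [ocell, closure_prod_eq, closure_Ioo (hξ (by omega)).ne, closure_Ioo (hξ (by omega)).ne, cell_eq]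

lemma isClosed_cell (ξ : ℤ → ℝ) (k : ℤ × ℤ) : IsClosed (cell ξ k) := by
  rw [cell_eq]; exact isClosed_Icc.prod isClosed_Icc

lemma ocell_subset_cell (ξ : ℤ → ℝ) (k : ℤ × ℤ) : ocell ξ k ⊆ cell ξ k := by
  rw [cell_eq]; exact prod_mono Ioo_subset_Icc_self Ioo_subset_Icc_self

lemma ocell_cell {ξ : ℤ → ℝ} (hξ : StrictMono ξ) {k l : ℤ × ℤ} {z : ℝ × ℝ} (hk : z ∈ ocell ξ k)
    (hl : z ∈ cell ξ l) : l = k := by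
  obtain ⟨⟨a1, a2⟩, a3, a4⟩ := hk
  obtain ⟨b1, b2, b3, b4⟩ := hl
  have c1 := hξ.lt_iff_lt.1 (a1.trans_le b2)
  have c2 := hξ.lt_iff_lt.1 (b1.trans_lt a2)
  have c3 := hξ.lt_iff_lt.1 (a3.trans_le b4)
  have c4 := hξ.lt_iff_lt.1 (b3.trans_lt a4)
  exact Prod.ext (by omega) (by omega)

lemma isClosed_XX {ξ : ℤ → ℝ} {S : Set (ℤ × ℤ)} (hS : S.Finite) : IsClosed (XX ξ S) := by
  have : XX ξ S = ⋃ k ∈ S, cell ξ k := by ext z; simp [XX]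
  rw [this]
  exact hS.isClosed_biUnion fun k _ => isClosed_cell ξ k

lemma one_d {ξ : ℤ → ℝ} {δ : ℝ} (hg : Grid ξ δ) {i : ℤ} {w : ℝ} (h1 : ξ i - δ ≤ w)
    (h2 : w ≤ ξ (i + 1) + δ) : ∃ j, i ≤ j + 1 ∧ j ≤ i + 1 ∧ ξ j ≤ w ∧ w ≤ ξ (j + 1) := by
  rcases le_total w (ξ i) with h | h
  · have := hg.2 (i - 1)
    rw [sub_add_cancel] at this
    exact ⟨i - 1, by omega, by omega, by have := hg.1; linarith, by simpa using h⟩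
  rcases le_total w (ξ (i + 1)) with h' | h'
  · exact ⟨i, by omega, by omega, h, h'⟩
  · have := hg.2 (i + 1)
    exact ⟨i + 1, by omega, by omega, h', by have := hg.1; linarith⟩

lemma tcell_nbr {ξ : ℤ → ℝ} {δ : ℝ} (hg : Grid ξ δ) {k : ℤ × ℤ} {z : ℝ × ℝ} (hz : z ∈ tcell ξ δ k) :
    ∃ l, adj8 k l ∧ z ∈ cell ξ l := by
  obtain ⟨a1, a2, a3, a4⟩ := hz
  obtain ⟨x, b1, b2, b3, b4⟩ := one_d hg a1 a2
  obtain ⟨y, c1, c2, c3, c4⟩ := one_d hg a3 a4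
  exact ⟨(x, y), ⟨b1, b2, c1, c2⟩, ⟨b3, b4, c3, c4⟩⟩

lemma tcell_nhds {ξ : ℤ → ℝ} {δ : ℝ} (hδ : 0 < δ) {k : ℤ × ℤ} {z : ℝ × ℝ} (hz : z ∈ cell ξ k) :
    tcell ξ δ k ∈ nhds z := by
  obtain ⟨a1, a2, a3, a4⟩ := hz
  refine Filter.mem_of_superset (prod_mem_nhds (Ioo_mem_nhds (a := ξ k.1 - δ) (b := ξ (k.1 + 1) + δ)
    (by linarith) (by linarith)) (Ioo_mem_nhds (a := ξ k.2 - δ) (b := ξ (k.2 + 1) + δ)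
    (by linarith) (by linarith))) ?_
  rintro w ⟨⟨b1, b2⟩, b3, b4⟩
  exact ⟨b1.le, b2.le, b3.le, b4.le⟩

lemma XX_union (ξ : ℤ → ℝ) (S H : Set (ℤ × ℤ)) : XX ξ (S ∪ H) = XX ξ S ∪ XX ξ H := by
  ext z
  constructor
  · rintro ⟨k, hk | hk, hz⟩
    · exact Or.inl ⟨k, hk, hz⟩
    · exact Or.inr ⟨k, hk, hz⟩
  · rintro (⟨k, hk, hz⟩ | ⟨k, hk, hz⟩)
    · exact ⟨k, Or.inl hk, hz⟩
    · exact ⟨k, Or.inr hk, hz⟩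

lemma XX_hole {ξ : ℤ → ℝ} {δ : ℝ} (hg : Grid ξ δ) {S H : Set (ℤ × ℤ)} (hS : S.Finite)
    (hdis : Disjoint S H) (hnb : ∀ k ∈ H, ∀ k', adj8 k k' → k' ∈ S ∪ H) :
    XX ξ S = XX ξ (S ∪ H) \ interior (XX ξ H) := by
  ext z
  constructor
  · rintro ⟨k, hk, hz⟩
    refine ⟨⟨k, Or.inl hk, hz⟩, fun hinter => ?_⟩
    rw [← closure_ocell hg.mono] at hz
    obtain ⟨w, hw1, hw2⟩ := mem_closure_iff.1 hz _ isOpen_interior hinter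
    obtain ⟨l, hl, hwl⟩ := interior_subset hw1
    rw [ocell_cell hg.mono hw2 hwl] at hl
    exact Set.disjoint_left.1 hdis hk hl
  · rintro ⟨hz, hinter⟩
    by_contra hzS
    rw [XX_union] at hz
    obtain ⟨k, hk, hzk⟩ := hz.resolve_left hzS
    apply hinter
    rw [mem_interior_iff_mem_nhds]
    filter_upwards [tcell_nhds hg.1 hzk, (isClosed_XX hS).isOpen_compl.mem_nhds hzS] with w h1 h2
    obtain ⟨l, hl, hwl⟩ := tcell_nbr hg h1
    rcases hnb k hk l hl with h | h
    · exact absurd ⟨l, h, hwl⟩ h2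
    · exact ⟨l, h, hwl⟩

lemma supp_iff {α : Type*} [TopologicalSpace α] {N : Set α} (Φ : α ≃ₜ α)
    (h : ∀ z, z ∉ N → Φ z = z) (z : α) : Φ z ∈ N ↔ z ∈ N := by
  constructor
  · intro h'
    by_contra hc
    rw [h z hc] at h'
    exact hc h'
  · exact supp_mem Φ.injective h

theorem top_core {ξ : ℤ → ℝ} {δ : ℝ} (hg : Grid ξ δ) {S : Set (ℤ × ℤ)} (hfin : S.Finite)
    {s0 : ℤ × ℤ} (hs0 : s0 ∈ S)
    (hconn : ∀ u ∈ S, ∀ v ∈ S, Conn4 S u v) (hwc : WC S)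
    (hT : ∀ a ∉ S, ∀ b ∉ S, ∀ c ∉ S, Conn8 Sᶜ a b ∨ Conn8 Sᶜ a c ∨ Conn8 Sᶜ b c) :
    ∃ Θ : ℝ × ℝ ≃ₜ EuclideanSpace ℝ (Fin 2), (∀ z, Θ z ∈ closedBall 0 1 ↔ z ∈ XX ξ S) ∨
      (∀ z, Θ z ∈ {x | 1 ≤ ‖x‖ ∧ ‖x‖ ≤ 2} ↔ z ∈ XX ξ S) := by
  have hmono := hg.mono
  rcases comb_core hfin hs0 hconn hwc hT with hS | ⟨H, ⟨h0, hh0⟩, hH, hD, hdis, hnb⟩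
  · obtain ⟨Φ, hΦ, -⟩ := DT hg _ le_rfl hS.fin hS.conn hS.wc hS.co hs0
    obtain ⟨c, d, hR, h1, h2⟩ := exists_run hfin hs0
    rw [Rn_eq_runset hR h1 h2, XX_runset hmono.monotone hR.1] at hΦ
    obtain ⟨Θ, hΘ⟩ := rect_disk (hmono (show s0.1 < s0.1 + 1 by omega)) (hmono hR.1)
    refine ⟨Φ.trans Θ, Or.inl fun z => ?_⟩
    rw [Homeomorph.trans_apply, hΘ, hΦ]
  · obtain ⟨D, hDdef⟩ : ∃ D, D = S ∪ H := ⟨_, rfl⟩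
    have hXS := XX_hole hg hfin hdis hnb
    rw [← hDdef] at hnb hD hXS
    have hHD : H ⊆ D := by rw [hDdef]; exact subset_union_right
    have hδ := hg.1
    obtain ⟨Φ1, hΦ1, hΦs1⟩ := DT hg _ le_rfl hH.fin hH.conn hH.wc hH.co hh0
    obtain ⟨Φ3, hΦ3, hΦs3⟩ := DT hg _ le_rfl hD.fin hD.conn hD.wc hD.co (hHD hh0)
    obtain ⟨c, d, hR, h1, h2⟩ := exists_run hH.fin hh0
    obtain ⟨c0, d0, hR0, h10, h20⟩ := exists_run hD.fin (hHD hh0)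
    rw [Rn_eq_runset hR h1 h2, XX_runset hmono.monotone hR.1] at hΦ1
    rw [Rn_eq_runset hR0 h10 h20] at hΦs3
    rw [Rn_eq_runset hR0 h10 h20, XX_runset hmono.monotone hR0.1] at hΦ3
    obtain ⟨i, j⟩ := h0
    dsimp only at *
    have hcd := hR.1
    -- the `D` run is strictly longer
    have hnbR : ∀ x y, i - 1 ≤ x → x ≤ i + 1 → c - 1 ≤ y → y ≤ d → (x, y) ∈ D := by
      intro x y g1 g2 g3 g4
      refine hnb (i, max c (min y (d - 1))) (hR.2.1 _ (by omega) (by omega)) _ ?_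
      simp only [adj8]
      omega
    have hc0 : c0 < c := by
      by_contra hc
      exact hR0.2.2.1 (hnbR i (c0 - 1) (by omega) (by omega) (by omega) (by omega))
    have hd0 : d < d0 := by
      by_contra hc
      exact hR0.2.2.2 (hnbR i d0 (by omega) (by omega) (by omega) (by omega))
    have hgap := hg.2 i
    obtain ⟨a', ha'⟩ : ∃ a', a' = ξ i + 4 / 3 * δ := ⟨_, rfl⟩
    obtain ⟨b', hb'⟩ : ∃ b', b' = ξ (i + 1) - 4 / 3 * δ := ⟨_, rfl⟩
    have k1 : ξ i < a' := by linarith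
    have k2 : a' < b' := by linarith
    have k3 : b' < ξ (i + 1) := by linarith
    obtain ⟨Φ2, hΦs2, hΦ2⟩ := shrink k1 k2 k3 (hmono hcd) hδ
    -- supports
    have s1 : ∀ z, z ∉ XX ξ D → Φ1 z = z := by
      intro z hz
      apply hΦs1
      intro k hk hzk
      obtain ⟨l, hl, hzl⟩ := tcell_nbr hg hzk
      exact hz ⟨l, hnb k hk.1 l hl, hzl⟩
    have s2 : ∀ z, z ∉ XX ξ D → Φ2 z = z := by
      intro z hz
      apply hΦs2
      rintro ⟨g1, g2, g3, g4⟩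
      obtain ⟨y, y1, y2, y3, y4⟩ := exists_between_lines hδ.le hcd g3 g4
      obtain ⟨l, hl, hzl⟩ := tcell_nbr (k := (i, y)) hg ⟨g1, g2, y3, y4⟩
      exact hz ⟨l, hnb _ (hR.2.1 y y1 y2) l hl, hzl⟩
    have s3 : ∀ z ∈ box a' b' (ξ c) (ξ d), Φ3 z = z := by
      rintro z ⟨g1, g2, g3, g4⟩
      apply hΦs3
      rintro k ⟨hkD, hkR⟩ ⟨q1, q2, q3, q4⟩
      have r1 := hmono.lt_iff_lt.1 (show ξ i < ξ (k.1 + 1) by linarith)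
      have r2 := hmono.lt_iff_lt.1 (show ξ k.1 < ξ (i + 1) by linarith)
      have r3 := hg.le (show ξ c ≤ ξ (k.2 + 1) + 2 * δ by linarith)
      have r4 := hg.le (show ξ k.2 ≤ ξ d + 2 * δ by linarith)
      exact hkR (vrun_vert hR0 hkD (by omega) (by omega) (by omega))
    have s3' : ∀ z, Φ3 z ∈ box a' b' (ξ c) (ξ d) ↔ z ∈ box a' b' (ξ c) (ξ d) := by
      intro z
      constructor
      · intro h
        have := Φ3.injective (s3 _ h)
        rwa [this] at h
      · intro h
        rwa [s3 z h]
    obtain ⟨Θ, hΘ⟩ := rect_annulus k1 k2 k3 (hmono hc0) (hmono hcd) (hmono hd0)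
    refine ⟨((Φ1.trans Φ2).trans Φ3).trans Θ, Or.inr fun z => ?_⟩
    rw [Homeomorph.trans_apply, hΘ, hXS, mem_sdiff, mem_sdiff]
    refine and_congr ?_ (not_congr ?_)
    · rw [Homeomorph.trans_apply, hΦ3, Homeomorph.trans_apply, supp_iff Φ2 s2, supp_iff Φ1 s1]
    · apply homeo_interior
      intro w
      rw [Homeomorph.trans_apply, s3', Homeomorph.trans_apply, hΦ2, hΦ1]

/-- the grid lines cover the line -/
def Cov (ξ : ℤ → ℝ) : Prop := ∀ w, ∃ i, ξ i ≤ w ∧ w ≤ ξ (i + 1)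

lemma Cov.cell {ξ : ℤ → ℝ} (h : Cov ξ) (z : ℝ × ℝ) : ∃ k, z ∈ cell ξ k := by
  obtain ⟨i, h1, h2⟩ := h z.1
  obtain ⟨j, h3, h4⟩ := h z.2
  exact ⟨(i, j), h1, h2, h3, h4⟩

lemma cell_adj8 {ξ : ℤ → ℝ} (hξ : StrictMono ξ) {k l : ℤ × ℤ} {z : ℝ × ℝ} (hk : z ∈ cell ξ k)
    (hl : z ∈ cell ξ l) : adj8 k l := by
  obtain ⟨a1, a2, a3, a4⟩ := hk
  obtain ⟨b1, b2, b3, b4⟩ := hl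
  exact ⟨hξ.le_iff_le.1 (a1.trans b2), hξ.le_iff_le.1 (b1.trans a2),
    hξ.le_iff_le.1 (a3.trans b4), hξ.le_iff_le.1 (b3.trans a4)⟩

lemma isClosed_XX' {ξ : ℤ → ℝ} {δ : ℝ} (hg : Grid ξ δ) (hc : Cov ξ) (E : Set (ℤ × ℤ)) :
    IsClosed (XX ξ E) := by
  have hlf : LocallyFinite (fun k : E => cell ξ k) := by
    intro z
    obtain ⟨k, hk⟩ := hc.cell z
    refine ⟨tcell ξ δ k, tcell_nhds hg.1 hk, ?_⟩
    refine Set.Finite.subset (((Set.finite_Icc (k.1 - 1) (k.1 + 1)).prod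
      (Set.finite_Icc (k.2 - 1) (k.2 + 1))).preimage Subtype.val_injective.injOn) ?_
    rintro ⟨l, hl⟩ ⟨w, ⟨a1, a2, a3, a4⟩, ⟨b1, b2, b3, b4⟩⟩
    have hδ := hg.1
    have c1 := hg.le (show ξ l.1 ≤ ξ (k.1 + 1) + 2 * δ by linarith)
    have c2 := hg.le (show ξ k.1 ≤ ξ (l.1 + 1) + 2 * δ by linarith)
    have c3 := hg.le (show ξ l.2 ≤ ξ (k.2 + 1) + 2 * δ by linarith)
    have c4 := hg.le (show ξ k.2 ≤ ξ (l.2 + 1) + 2 * δ by linarith)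
    exact ⟨⟨by dsimp only; omega, by dsimp only; omega⟩, ⟨by dsimp only; omega, by dsimp only; omega⟩⟩
  have : XX ξ E = ⋃ k : E, cell ξ k := by ext z; simp [XX]
  rw [this]
  exact hlf.isClosed_iUnion fun k => isClosed_cell ξ k

lemma comp8 {ξ : ℤ → ℝ} {δ : ℝ} (hg : Grid ξ δ) (hc : Cov ξ) {E : Set (ℤ × ℤ)} {W : Set (ℝ × ℝ)}
    (hW : IsPreconnected W) (hWE : W ⊆ XX ξ E) {t t' : ℤ × ℤ} (ht : t ∈ E)
    (hz : (W ∩ ocell ξ t).Nonempty) (hz' : (W ∩ ocell ξ t').Nonempty) : Conn8 E t t' := by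
  obtain ⟨z, hzW, hzt⟩ := hz
  obtain ⟨z', hzW', hzt'⟩ := hz'
  by_contra hcon
  have h := (isPreconnected_closed_iff.1 hW) (XX ξ {k | k ∈ E ∧ Conn8 E t k})
    (XX ξ {k | k ∈ E ∧ ¬ Conn8 E t k}) (isClosed_XX' hg hc _) (isClosed_XX' hg hc _) ?_
    ⟨z, hzW, t, ⟨ht, Conn8.refl _⟩, ocell_subset_cell _ _ hzt⟩ ?_
  · obtain ⟨w, -, ⟨k, hk, hwk⟩, l, hl, hwl⟩ := h
    exact hl.2 (hk.2.trans (Conn8.single (cell_adj8 hg.mono hwk hwl) hk.1 hl.1))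
  · intro w hw
    obtain ⟨k, hk, hwk⟩ := hWE hw
    by_cases hkt : Conn8 E t k
    · exact Or.inl ⟨k, ⟨hk, hkt⟩, hwk⟩
    · exact Or.inr ⟨k, ⟨hk, hkt⟩, hwk⟩
  · obtain ⟨k, hk, hwk⟩ := hWE hzW'
    have := ocell_cell hg.mono hzt' hwk
    rw [this] at hk hwk
    exact ⟨z', hzW', t', ⟨hk, hcon⟩, hwk⟩

/-- center of a cell -/
def ctr (ξ : ℤ → ℝ) (k : ℤ × ℤ) : ℝ × ℝ := ((ξ k.1 + ξ (k.1 + 1)) / 2, (ξ k.2 + ξ (k.2 + 1)) / 2)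

lemma ctr_mem {ξ : ℤ → ℝ} (hξ : StrictMono ξ) (k : ℤ × ℤ) : ctr ξ k ∈ ocell ξ k := by
  have h1 := hξ (show k.1 < k.1 + 1 by omega)
  have h2 := hξ (show k.2 < k.2 + 1 by omega)
  refine ⟨⟨?_, ?_⟩, ?_, ?_⟩ <;> simp only [ctr] <;> linarith

lemma preconn_ocell (ξ : ℤ → ℝ) (k : ℤ × ℤ) : IsPreconnected (ocell ξ k) :=
  isPreconnected_Ioo.prod isPreconnected_Ioo

lemma cell_inter_infinite {ξ : ℤ → ℝ} (hξ : StrictMono ξ) {s t : ℤ × ℤ} (h : adj4 t s) :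
    (cell ξ t ∩ cell ξ s).Infinite := by
  have key : ∀ {s t : ℤ × ℤ}, s.1 = t.1 ∧ s.2 = t.2 + 1 ∨ s.2 = t.2 ∧ s.1 = t.1 + 1 →
      (cell ξ t ∩ cell ξ s).Infinite := by
    rintro ⟨x, y⟩ ⟨x', y'⟩ (⟨h1, h2⟩ | ⟨h1, h2⟩)
    · dsimp only at h1 h2
      subst h1 h2
      have : (fun a => (a, ξ (y' + 1))) '' Icc (ξ x) (ξ (x + 1)) ⊆ cell ξ (x, y') ∩ cell ξ (x, y' + 1) := by
        rintro _ ⟨a, ha, rfl⟩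
        exact ⟨⟨ha.1, ha.2, (hξ (by omega)).le, le_rfl⟩, ⟨ha.1, ha.2, le_rfl, (hξ (by omega)).le⟩⟩
      exact Set.Infinite.mono this ((Set.Icc_infinite (hξ (by omega))).image
        (fun a _ b _ hab => (Prod.mk.inj hab).1))
    · dsimp only at h1 h2
      subst h1 h2
      have : (fun a => (ξ (x' + 1), a)) '' Icc (ξ y) (ξ (y + 1)) ⊆ cell ξ (x', y) ∩ cell ξ (x' + 1, y) := by
        rintro _ ⟨a, ha, rfl⟩
        exact ⟨⟨(hξ (by omega)).le, le_rfl, ha.1, ha.2⟩, ⟨le_rfl, (hξ (by omega)).le, ha.1, ha.2⟩⟩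
      exact Set.Infinite.mono this ((Set.Icc_infinite (hξ (by omega))).image
        (fun a _ b _ hab => (Prod.mk.inj hab).2))
  unfold adj4 at h
  by_cases hh : s.1 = t.1 ∧ s.2 = t.2 + 1 ∨ s.2 = t.2 ∧ s.1 = t.1 + 1
  · exact key hh
  · rw [inter_comm]
    exact key (by omega)

/-- two neighbouring open cells lie in a preconnected set meeting only these two closed cells -/
lemma dbl {ξ : ℤ → ℝ} (hξ : StrictMono ξ) {s t : ℤ × ℤ} (h : adj4 t s) :
    ∃ E : Set (ℝ × ℝ), IsPreconnected E ∧ ocell ξ s ⊆ E ∧ ocell ξ t ⊆ E ∧ E ⊆ cell ξ s ∪ cell ξ t ∧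
      ∀ z ∈ E, ∀ l, z ∈ cell ξ l → l = s ∨ l = t := by
  refine ⟨Ioo (ξ (min s.1 t.1)) (ξ (max s.1 t.1 + 1)) ×ˢ Ioo (ξ (min s.2 t.2)) (ξ (max s.2 t.2 + 1)),
    isPreconnected_Ioo.prod isPreconnected_Ioo, ?_, ?_, ?_, ?_⟩
  · exact prod_mono (Ioo_subset_Ioo (hξ.monotone (by omega)) (hξ.monotone (by omega)))
      (Ioo_subset_Ioo (hξ.monotone (by omega)) (hξ.monotone (by omega)))
  · exact prod_mono (Ioo_subset_Ioo (hξ.monotone (by omega)) (hξ.monotone (by omega)))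
      (Ioo_subset_Ioo (hξ.monotone (by omega)) (hξ.monotone (by omega)))
  · rintro z ⟨⟨a1, a2⟩, a3, a4⟩
    obtain ⟨x, y⟩ := s
    obtain ⟨x', y'⟩ := t
    simp only [adj4] at h
    dsimp only at a1 a2 a3 a4
    obtain ⟨i, i1, i2, i3, i4⟩ := exists_between_lines (ξ := ξ) (δ := 0) le_rfl
      (show min x x' < max x x' + 1 by omega) (by linarith : _ ≤ z.1) (by linarith)
    obtain ⟨j, j1, j2, j3, j4⟩ := exists_between_lines (ξ := ξ) (δ := 0) le_rfl
      (show min y y' < max y y' + 1 by omega) (by linarith : _ ≤ z.2) (by linarith)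
    have hz : z ∈ cell ξ (i, j) := ⟨by simpa using i3, by simpa using i4, by simpa using j3,
      by simpa using j4⟩
    rcases (by omega : (i = x ∧ j = y) ∨ (i = x' ∧ j = y')) with ⟨e1, e2⟩ | ⟨e1, e2⟩
    · left; rw [e1, e2] at hz; exact hz
    · right; rw [e1, e2] at hz; exact hz
  · rintro z ⟨⟨a1, a2⟩, a3, a4⟩ l ⟨b1, b2, b3, b4⟩
    have c1 := hξ.lt_iff_lt.1 (a1.trans_le b2)
    have c2 := hξ.lt_iff_lt.1 (b1.trans_lt a2)
    have c3 := hξ.lt_iff_lt.1 (a3.trans_le b4)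
    have c4 := hξ.lt_iff_lt.1 (b3.trans_lt a4)
    unfold adj4 at h
    rcases (by omega : (l.1 = s.1 ∧ l.2 = s.2) ∨ (l.1 = t.1 ∧ l.2 = t.2)) with ⟨e1, e2⟩ | ⟨e1, e2⟩
    · left; exact Prod.ext e1 e2
    · right; exact Prod.ext e1 e2

/-- crossing any grid line does not change both sets -/
def Lines (A B : Set (ℤ × ℤ)) : Prop :=
  (∀ i, (∀ j, (i, j) ∈ A ↔ (i + 1, j) ∈ A) ∨ (∀ j, (i, j) ∈ B ↔ (i + 1, j) ∈ B)) ∧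
  (∀ j, (∀ i, (i, j) ∈ A ↔ (i, j + 1) ∈ A) ∨ (∀ i, (i, j) ∈ B ↔ (i, j + 1) ∈ B))

lemma Lines.adj {A B : Set (ℤ × ℤ)} (h : Lines A B) {s t : ℤ × ℤ} (hst : adj4 s t) :
    (s ∈ A ↔ t ∈ A) ∨ (s ∈ B ↔ t ∈ B) := by
  obtain ⟨x, y⟩ := s
  obtain ⟨x', y'⟩ := t
  simp only [adj4] at hst
  rcases hst with ⟨rfl, h1 | h1⟩ | ⟨rfl, h1 | h1⟩
  · subst h1; exact (h.2 y).imp (fun g => g x) (fun g => g x)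
  · subst h1; exact (h.2 y').imp (fun g => (g x).symm) (fun g => (g x).symm)
  · subst h1; exact (h.1 x).imp (fun g => g y) (fun g => g y)
  · subst h1; exact (h.1 x').imp (fun g => (g y).symm) (fun g => (g y).symm)

lemma wc_class {A B S : Set (ℤ × ℤ)} (hA : WC A) (hB : WC B) (hl : Lines A B) (hSA : ∀ s ∈ S, s ∈ A)
    (hSB : ∀ s ∈ S, s ∉ B) (hSc : ∀ s ∈ S, ∀ t, adj4 s t → t ∈ A → t ∉ B → t ∈ S) : WC S := by
  -- `p`, `q` the other two cells of a square with `u`, `v` opposite in `S`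
  have key : ∀ u ∈ S, ∀ v ∈ S, ∀ p q, adj4 u p → adj4 p v → adj4 u q → adj4 q v →
      (((p ∈ A ↔ v ∈ A) ∧ (u ∈ A ↔ q ∈ A)) ∨ ((p ∈ B ↔ v ∈ B) ∧ (u ∈ B ↔ q ∈ B))) →
      (p ∈ B → q ∈ B → u ∈ B ∨ v ∈ B) → p ∈ A → p ∈ S ∨ q ∈ S := by
    intro u hu v hv p q h1 h2 h3 h4 hline hwcB hpA
    by_cases hpB : p ∈ B
    · right
      rcases hline with ⟨g1, g2⟩ | ⟨g1, g2⟩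
      · refine hSc u hu q h3 (g2.1 (hSA u hu)) fun hqB => ?_
        exact (hwcB hpB hqB).elim (hSB u hu) (hSB v hv)
      · exact absurd (g1.1 hpB) (hSB v hv)
    · exact Or.inl (hSc u hu p h1 hpA hpB)
  intro i j
  have a1 : adj4 (i, j) (i + 1, j) := Or.inr ⟨rfl, Or.inl rfl⟩
  have a2 : adj4 (i, j) (i, j + 1) := Or.inl ⟨rfl, Or.inl rfl⟩
  have a3 : adj4 (i + 1, j) (i + 1, j + 1) := Or.inl ⟨rfl, Or.inl rfl⟩
  have a4 : adj4 (i, j + 1) (i + 1, j + 1) := Or.inr ⟨rfl, Or.inl rfl⟩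
  constructor
  · intro hu hv
    rcases (hA i j).1 (hSA _ hu) (hSA _ hv) with h | h
    · exact key _ hu _ hv _ (i, j + 1) a1 a3 a2 a4
        ((hl.2 j).imp (fun g => ⟨g _, g _⟩) (fun g => ⟨g _, g _⟩)) (hB i j).2 h
    · exact (key _ hu _ hv _ (i + 1, j) a2 a4 a1 a3
        ((hl.1 i).imp (fun g => ⟨g _, g _⟩) (fun g => ⟨g _, g _⟩))
        (fun h1 h2 => (hB i j).2 h2 h1) h).symm
  · intro hu hv
    rcases (hA i j).2 (hSA _ hu) (hSA _ hv) with h | h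
    · exact key _ hu _ hv _ (i + 1, j + 1) a1.symm a2 a3 a4.symm
        ((hl.2 j).imp (fun g => ⟨g _, g _⟩) (fun g => ⟨g _, g _⟩)) (hB i j).1 h
    · exact (key _ hu _ hv _ (i, j) a3 a4.symm a1.symm a2
        ((hl.1 i).imp (fun g => ⟨(g _).symm, (g _).symm⟩) (fun g => ⟨(g _).symm, (g _).symm⟩))
        (fun h1 h2 => ((hB i j).1 h2 h1)) h).symm

theorem stepA {ξ : ℤ → ℝ} {δ : ℝ} (hg : Grid ξ δ) (hc : Cov ξ) {A B : Set (ℤ × ℤ)} (hAf : A.Finite)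
    (hA : WC A) (hB : WC B) (hl : Lines A B) {x0 : ℝ × ℝ} {C : Set (ℝ × ℝ)}
    (hx0 : x0 ∈ XX ξ A ∩ (XX ξ B)ᶜ) (hC : C = connectedComponentIn (XX ξ A ∩ (XX ξ B)ᶜ) x0)
    (hTP : ∀ p ∈ XX ξ A ∩ XX ξ B, ∀ q ∈ XX ξ A ∩ XX ξ B,
      (closure (connectedComponentIn (XX ξ A ∩ XX ξ B) p) ∩ closure C).Infinite →
      (closure (connectedComponentIn (XX ξ A ∩ XX ξ B) q) ∩ closure C).Infinite →
      connectedComponentIn (XX ξ A ∩ XX ξ B) p = connectedComponentIn (XX ξ A ∩ XX ξ B) q)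
    (hTN : ∀ p ∈ (XX ξ A)ᶜ ∩ (XX ξ B)ᶜ, ∀ q ∈ (XX ξ A)ᶜ ∩ (XX ξ B)ᶜ,
      (closure (connectedComponentIn ((XX ξ A)ᶜ ∩ (XX ξ B)ᶜ) p) ∩ closure C).Infinite →
      (closure (connectedComponentIn ((XX ξ A)ᶜ ∩ (XX ξ B)ᶜ) q) ∩ closure C).Infinite →
      connectedComponentIn ((XX ξ A)ᶜ ∩ (XX ξ B)ᶜ) p = connectedComponentIn ((XX ξ A)ᶜ ∩ (XX ξ B)ᶜ) q) :
    ∃ Θ : ℝ × ℝ ≃ₜ EuclideanSpace ℝ (Fin 2), (∀ z, Θ z ∈ closedBall 0 1 ↔ z ∈ closure C) ∨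
      (∀ z, Θ z ∈ {x | 1 ≤ ‖x‖ ∧ ‖x‖ ≤ 2} ↔ z ∈ closure C) := by
  have hξ := hg.mono
  obtain ⟨⟨k0, hk0A, hx0k⟩, hx0B⟩ := id hx0
  have hk0B : k0 ∉ B := fun h => hx0B ⟨k0, h, hx0k⟩
  obtain ⟨S, hS⟩ : ∃ S : Set (ℤ × ℤ), S = {k | Conn4 (A \ B) k0 k} := ⟨_, rfl⟩
  have hSm : ∀ k, k ∈ S ↔ Conn4 (A \ B) k0 k := fun k => by rw [hS]; rfl
  have hSAB : ∀ k ∈ S, k ∈ A \ B := fun k hk => ((hSm k).1 hk).mem ⟨hk0A, hk0B⟩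
  have hk0S : k0 ∈ S := (hSm _).2 (Conn4.refl _)
  have hSc : ∀ s ∈ S, ∀ t, adj4 s t → t ∈ A → t ∉ B → t ∈ S := fun s hs t hst h1 h2 =>
    (hSm _).2 (((hSm s).1 hs).trans (Conn4.single hst (hSAB s hs) ⟨h1, h2⟩))
  have hSwc : WC S := wc_class hA hB hl (fun s hs => (hSAB s hs).1) (fun s hs => (hSAB s hs).2) hSc
  have hSfin : S.Finite := hAf.subset fun s hs => (hSAB s hs).1
  have hSconn' : ∀ v, Conn4 (A \ B) k0 v → Conn4 S k0 v := by
    intro v hv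
    induction hv with
    | refl => exact Conn4.refl _
    | @tail b b' hb hs ih => exact ih.trans (Conn4.single hs.1 ((hSm _).2 hb) ((hSm _).2 (hb.tail hs)))
  have hSconn : ∀ u ∈ S, ∀ v ∈ S, Conn4 S u v := fun u hu v hv =>
    (hSconn' u ((hSm u).1 hu)).symm.trans (hSconn' v ((hSm v).1 hv))
  -- the component is contained in the union of the cells of `S`
  have hCsub : C ⊆ XX ξ A ∩ (XX ξ B)ᶜ := by rw [hC]; exact connectedComponentIn_subset _ _
  have hCpre : IsPreconnected C := by rw [hC]; exact isPreconnected_connectedComponentIn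
  have hx0C : x0 ∈ C := by rw [hC]; exact mem_connectedComponentIn hx0
  have hCS : C ⊆ XX ξ S := by
    intro y hy
    by_contra hyS
    have h := (isPreconnected_closed_iff.1 hCpre) (XX ξ S) (XX ξ {k | k ∈ A \ B ∧ k ∉ S})
      (isClosed_XX' hg hc _) (isClosed_XX' hg hc _) ?_ ⟨x0, hx0C, k0, hk0S, hx0k⟩ ?_
    · obtain ⟨w, hwC, ⟨s, hs, hws⟩, t, ⟨ht1, ht2⟩, hwt⟩ := h
      have hwB := (hCsub hwC).2
      have hadj := cell_adj8 hξ hws hwt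
      apply ht2
      by_cases h4 : s = t
      · rw [← h4]; exact hs
      by_cases h5 : adj4 s t
      · exact hSc s hs t h5 ht1.1 ht1.2
      -- diagonal case
      have hmid : ∀ p, adj4 s p → adj4 p t → w ∈ cell ξ p → p ∈ A → t ∈ S := by
        intro p h1 h2 h3 h4
        have hpB : p ∉ B := fun h => hwB ⟨p, h, h3⟩
        exact hSc p (hSc s hs p h1 h4 hpB) t h2 ht1.1 ht1.2
      have hsA := (hSAB s hs).1
      have htA := ht1.1
      clear hx0k hk0S hs ht1 ht2
      obtain ⟨x, y⟩ := s
      obtain ⟨x', y'⟩ := t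
      simp only [adj8] at hadj
      have hx : x ≠ x' := by
        intro h
        by_cases h' : y = y'
        · exact h4 (by rw [h, h'])
        · exact h5 (Or.inl ⟨h, by dsimp only; omega⟩)
      have hy' : y ≠ y' := by
        intro h
        exact h5 (Or.inr ⟨h, by dsimp only; omega⟩)
      obtain ⟨b1, b2, b3, b4⟩ := hws
      obtain ⟨c1, c2, c3, c4⟩ := hwt
      have m1 := hmid (x', y) (Or.inr ⟨rfl, by dsimp only; omega⟩) (Or.inl ⟨rfl, by dsimp only; omega⟩)
        ⟨c1, c2, b3, b4⟩
      have m2 := hmid (x, y') (Or.inl ⟨rfl, by dsimp only; omega⟩) (Or.inr ⟨rfl, by dsimp only; omega⟩)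
        ⟨b1, b2, c3, c4⟩
      rcases (by omega : x' = x + 1 ∨ x = x' + 1) with h1 | h1 <;>
        rcases (by omega : y' = y + 1 ∨ y = y' + 1) with h2 | h2
      · subst h1 h2; exact ((hA x y).1 hsA htA).elim m1 m2
      · subst h1 h2; exact ((hA x y').2 htA hsA).elim m2 m1
      · subst h1 h2; exact ((hA x' y).2 hsA htA).elim m1 m2
      · subst h1 h2; exact ((hA x' y').1 htA hsA).elim m2 m1
    · intro w hw
      obtain ⟨⟨k, hk, hwk⟩, hwB⟩ := hCsub hw
      have hkB : k ∉ B := fun h => hwB ⟨k, h, hwk⟩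
      by_cases hkS : k ∈ S
      · exact Or.inl ⟨k, hkS, hwk⟩
      · exact Or.inr ⟨k, ⟨⟨hk, hkB⟩, hkS⟩, hwk⟩
    · obtain ⟨⟨k, hk, hwk⟩, hwB⟩ := hCsub hy
      have hkB : k ∉ B := fun h => hwB ⟨k, h, hwk⟩
      exact ⟨y, hy, k, ⟨⟨hk, hkB⟩, fun h => hyS ⟨k, h, hwk⟩⟩, hwk⟩
  have hoc : ∀ k ∈ A \ B, ocell ξ k ⊆ XX ξ A ∩ (XX ξ B)ᶜ := by
    intro k hk z hz
    refine ⟨⟨k, hk.1, ocell_subset_cell _ _ hz⟩, ?_⟩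
    rintro ⟨l, hl, hzl⟩
    rw [ocell_cell hξ hz hzl] at hl
    exact hk.2 hl
  have hgrow : ∀ E : Set (ℝ × ℝ), IsPreconnected E → E ⊆ XX ξ A ∩ (XX ξ B)ᶜ → (E ∩ C).Nonempty →
      E ⊆ C := by
    rintro E hE hEs ⟨w, hwE, hwC⟩
    rw [hC] at hwC ⊢
    rw [connectedComponentIn_eq hwC]
    exact hE.subset_connectedComponentIn hwE hEs
  have hocC : ∀ k, Conn4 (A \ B) k0 k → ocell ξ k ⊆ C := by
    intro k hk
    induction hk with
    | refl =>
      have hE : IsPreconnected (insert x0 (ocell ξ k0)) :=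
        (preconn_ocell ξ k0).subset_closure (subset_insert _ _)
          (insert_subset (by rw [closure_ocell hξ]; exact hx0k) subset_closure)
      exact (subset_insert _ _).trans (hgrow _ hE
        (insert_subset hx0 (hoc k0 ⟨hk0A, hk0B⟩)) ⟨x0, mem_insert _ _, hx0C⟩)
    | @tail b b' hb hs ih =>
      obtain ⟨E, hE1, hE2, hE3, hE4, hE5⟩ := dbl hξ hs.1
      refine hE2.trans (hgrow E hE1 ?_ ⟨ctr ξ b, hE3 (ctr_mem hξ b), ih (ctr_mem hξ b)⟩)
      intro z hz
      refine ⟨?_, ?_⟩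
      · rcases hE4 hz with h | h
        · exact ⟨b', hs.2.2.1, h⟩
        · exact ⟨b, hs.2.1.1, h⟩
      · rintro ⟨l, hl, hzl⟩
        rcases hE5 z hz l hzl with h | h
        · rw [h] at hl; exact hs.2.2.2 hl
        · rw [h] at hl; exact hs.2.1.2 hl
  have hclos : closure C = XX ξ S := by
    apply Subset.antisymm
    · exact closure_minimal hCS (isClosed_XX' hg hc S)
    · rintro z ⟨k, hk, hz⟩
      rw [← closure_ocell hξ] at hz
      exact closure_mono (hocC k ((hSm k).1 hk)) hz
  rw [hclos] at hTP hTN ⊢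
  have htype : ∀ t s, t ∉ S → s ∈ S → adj4 t s → (t ∈ A ∧ t ∈ B) ∨ (t ∉ A ∧ t ∉ B) := by
    intro t s ht hs hadj
    by_cases htA : t ∈ A
    · exact Or.inl ⟨htA, by_contra fun h => ht (hSc s hs t hadj.symm htA h)⟩
    · right
      refine ⟨htA, fun htB => ?_⟩
      rcases hl.adj hadj with h | h
      · exact htA (h.2 (hSAB s hs).1)
      · exact (hSAB s hs).2 (h.1 htB)
  have hinf : ∀ {W : Set (ℝ × ℝ)} {t s : ℤ × ℤ}, s ∈ S → adj4 t s → ocell ξ t ⊆ W →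
      (closure (connectedComponentIn W (ctr ξ t)) ∩ XX ξ S).Infinite := by
    intro W t s hs hadj hW
    refine (cell_inter_infinite hξ hadj).mono (inter_subset_inter ?_ fun z hz => ⟨s, hs, hz⟩)
    rw [← closure_ocell hξ]
    exact closure_mono ((preconn_ocell ξ t).subset_connectedComponentIn (ctr_mem hξ t) hW)
  have hTPc : ∀ t s t' s', s ∈ S → s' ∈ S → adj4 t s → adj4 t' s' → t ∈ A ∧ t ∈ B →
      t' ∈ A ∧ t' ∈ B → Conn8 Sᶜ t t' := by
    intro t s t' s' hs hs' hadj hadj' ht ht'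
    have hsub : ∀ t, t ∈ A ∧ t ∈ B → ocell ξ t ⊆ XX ξ A ∩ XX ξ B := fun t ht z hz =>
      ⟨⟨t, ht.1, ocell_subset_cell _ _ hz⟩, ⟨t, ht.2, ocell_subset_cell _ _ hz⟩⟩
    have hm := hsub t ht (ctr_mem hξ t)
    have hm' := hsub t' ht' (ctr_mem hξ t')
    have heq := hTP _ hm _ hm' (hinf hs hadj (hsub t ht)) (hinf hs' hadj' (hsub t' ht'))
    have := comp8 hg hc (W := connectedComponentIn (XX ξ A ∩ XX ξ B) (ctr ξ t)) (E := B)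
      (t := t) (t' := t') isPreconnected_connectedComponentIn
      ((connectedComponentIn_subset _ _).trans inter_subset_right) ht.2
      ⟨_, mem_connectedComponentIn hm, ctr_mem hξ t⟩
      ⟨_, by rw [heq]; exact mem_connectedComponentIn hm', ctr_mem hξ t'⟩
    have hBS : B ⊆ Sᶜ := fun x hx hxS => (hSAB x hxS).2 hx
    exact this.mono hBS
  have hTNc : ∀ t s t' s', s ∈ S → s' ∈ S → adj4 t s → adj4 t' s' → t ∉ A ∧ t ∉ B →
      t' ∉ A ∧ t' ∉ B → Conn8 Sᶜ t t' := by
    intro t s t' s' hs hs' hadj hadj' ht ht'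
    have hsub : ∀ t, t ∉ A ∧ t ∉ B → ocell ξ t ⊆ (XX ξ A)ᶜ ∩ (XX ξ B)ᶜ := by
      intro t ht z hz
      constructor
      · rintro ⟨l, hl, hzl⟩
        rw [ocell_cell hξ hz hzl] at hl
        exact ht.1 hl
      · rintro ⟨l, hl, hzl⟩
        rw [ocell_cell hξ hz hzl] at hl
        exact ht.2 hl
    have hm := hsub t ht (ctr_mem hξ t)
    have hm' := hsub t' ht' (ctr_mem hξ t')
    have heq := hTN _ hm _ hm' (hinf hs hadj (hsub t ht)) (hinf hs' hadj' (hsub t' ht'))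
    have := comp8 hg hc (W := connectedComponentIn ((XX ξ A)ᶜ ∩ (XX ξ B)ᶜ) (ctr ξ t)) (E := Aᶜ)
      (t := t) (t' := t') isPreconnected_connectedComponentIn
      (fun z hz => by
        have h1 := (connectedComponentIn_subset _ _ hz).1
        obtain ⟨k, hk⟩ := hc.cell z
        exact ⟨k, fun h => h1 ⟨k, h, hk⟩, hk⟩) ht.1
      ⟨_, mem_connectedComponentIn hm, ctr_mem hξ t⟩
      ⟨_, by rw [heq]; exact mem_connectedComponentIn hm', ctr_mem hξ t'⟩
    have hAS : Aᶜ ⊆ Sᶜ := fun x hx hxS => hx (hSAB x hxS).1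
    exact this.mono hAS
  apply top_core hg hSfin hk0S hSconn hSwc
  intro a ha b hb c hcc
  obtain ⟨a', sa, ha', hsa, aa, ca⟩ := walk hk0S ha
  obtain ⟨b', sb, hb', hsb, ab, cb⟩ := walk hk0S hb
  obtain ⟨c', sc, hc', hsc, ac, cc⟩ := walk hk0S hcc
  have fin : ∀ {u u' v v' su sv}, su ∈ S → sv ∈ S → adj4 u' su → adj4 v' sv → Conn8 Sᶜ u u' →
      Conn8 Sᶜ v v' → ((u' ∈ A ∧ u' ∈ B) ∧ (v' ∈ A ∧ v' ∈ B) ∨ (u' ∉ A ∧ u' ∉ B) ∧ (v' ∉ A ∧ v' ∉ B)) →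
      Conn8 Sᶜ u v := by
    intro u u' v v' su sv hsu hsv au av cu cv h
    refine cu.trans (Conn8.trans ?_ cv.symm)
    rcases h with ⟨h1, h2⟩ | ⟨h1, h2⟩
    · exact hTPc _ _ _ _ hsu hsv au av h1 h2
    · exact hTNc _ _ _ _ hsu hsv au av h1 h2
  rcases htype _ _ ha' hsa aa with h1 | h1 <;> rcases htype _ _ hb' hsb ab with h2 | h2
  · exact Or.inl (fin hsa hsb aa ab ca cb (Or.inl ⟨h1, h2⟩))
  · rcases htype _ _ hc' hsc ac with h3 | h3
    · exact Or.inr (Or.inl (fin hsa hsc aa ac ca cc (Or.inl ⟨h1, h3⟩)))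
    · exact Or.inr (Or.inr (fin hsb hsc ab ac cb cc (Or.inr ⟨h2, h3⟩)))
  · rcases htype _ _ hc' hsc ac with h3 | h3
    · exact Or.inr (Or.inr (fin hsb hsc ab ac cb cc (Or.inl ⟨h2, h3⟩)))
    · exact Or.inr (Or.inl (fin hsa hsc aa ac ca cc (Or.inr ⟨h1, h3⟩)))
  · exact Or.inl (fin hsa hsb aa ab ca cb (Or.inr ⟨h1, h2⟩))

/-- concrete grid lines -/
def lin (ε : ℝ) (i : ℤ) : ℝ :=
  ((i / 4 : ℤ) : ℝ) + (if i % 4 = 0 then -2 * ε else if i % 4 = 1 then -ε else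
    if i % 4 = 2 then ε else 2 * ε)

lemma lin0 (ε : ℝ) (n : ℤ) : lin ε (4 * n) = n - 2 * ε := by
  have h1 : (4 * n) / 4 = n := by omega
  have h2 : (4 * n) % 4 = 0 := by omega
  simp only [lin, h1, h2]; norm_num; ring
lemma lin1 (ε : ℝ) (n : ℤ) : lin ε (4 * n + 1) = n - ε := by
  have h1 : (4 * n + 1) / 4 = n := by omega
  have h2 : (4 * n + 1) % 4 = 1 := by omega
  simp only [lin, h1, h2]; norm_num; ring
lemma lin2 (ε : ℝ) (n : ℤ) : lin ε (4 * n + 2) = n + ε := by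
  have h1 : (4 * n + 2) / 4 = n := by omega
  have h2 : (4 * n + 2) % 4 = 2 := by omega
  simp only [lin, h1, h2]; norm_num
lemma lin3 (ε : ℝ) (n : ℤ) : lin ε (4 * n + 3) = n + 2 * ε := by
  have h1 : (4 * n + 3) / 4 = n := by omega
  have h2 : (4 * n + 3) % 4 = 3 := by omega
  simp only [lin, h1, h2]; norm_num
lemma lin4 (ε : ℝ) (n : ℤ) : lin ε (4 * n + 3 + 1) = n + 1 - 2 * ε := by
  have : 4 * n + 3 + 1 = 4 * (n + 1) := by ring
  rw [this, lin0]; push_cast; ring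

lemma lin_grid {ε : ℝ} (h0 : 0 < ε) (h1 : ε < 1 / 4) : Grid (lin ε) (min ε (1 - 4 * ε) / 4) := by
  have ha : min ε (1 - 4 * ε) ≤ ε := min_le_left _ _
  have hb : min ε (1 - 4 * ε) ≤ 1 - 4 * ε := min_le_right _ _
  have hc : 0 < min ε (1 - 4 * ε) := lt_min h0 (by linarith)
  refine ⟨by linarith, fun i => ?_⟩
  obtain ⟨n, hn⟩ : ∃ n, i = 4 * n ∨ i = 4 * n + 1 ∨ i = 4 * n + 2 ∨ i = 4 * n + 3 :=
    ⟨i / 4, by omega⟩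
  rcases hn with rfl | rfl | rfl | rfl
  · rw [lin0, lin1]; linarith
  · rw [show 4 * n + 1 + 1 = 4 * n + 2 by ring, lin1, lin2]; linarith
  · rw [show 4 * n + 2 + 1 = 4 * n + 3 by ring, lin2, lin3]; linarith
  · rw [lin4, lin3]; linarith

lemma lin_cov {ε : ℝ} (h0 : 0 < ε) (h1 : ε < 1 / 4) : Cov (lin ε) := by
  intro w
  have ha := Int.floor_le (w + 2 * ε)
  have hb := Int.lt_floor_add_one (w + 2 * ε)
  obtain ⟨j, -, -, h5, h6⟩ := exists_between_lines (ξ := lin ε) (δ := 0) le_rfl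
    (c := 4 * ⌊w + 2 * ε⌋) (d := 4 * ⌊w + 2 * ε⌋ + 3 + 1) (w := w) (by omega)
    (by rw [lin0]; linarith) (by rw [lin4]; linarith)
  exact ⟨j, by linarith, by linarith⟩

/-- index cells of thickened pixels -/
def SS (P : Set (ℕ × ℕ)) (a b : ℤ) : Set (ℤ × ℤ) :=
  {k | ∃ p ∈ P, 4 * (p.1 : ℤ) - a ≤ k.1 ∧ k.1 < 4 * (p.1 : ℤ) + b ∧
    4 * (p.2 : ℤ) - a ≤ k.2 ∧ k.2 < 4 * (p.2 : ℤ) + b}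

lemma SS_finite {P : Set (ℕ × ℕ)} {h w : ℕ} (hP : P ⊆ Set.Icc 1 h ×ˢ Set.Icc 1 w) (a b : ℤ) :
    (SS P a b).Finite := by
  have : SS P a b ⊆ ⋃ p ∈ P, (Set.Ico (4 * (p.1 : ℤ) - a) (4 * (p.1 : ℤ) + b)) ×ˢ
      (Set.Ico (4 * (p.2 : ℤ) - a) (4 * (p.2 : ℤ) + b)) := by
    rintro k ⟨p, hp, h1, h2, h3, h4⟩
    exact mem_biUnion hp ⟨⟨h1, h2⟩, h3, h4⟩
  refine Set.Finite.subset (Set.Finite.biUnion ?_ ?_) this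
  · exact ((Set.finite_Icc 1 h).prod (Set.finite_Icc 1 w)).subset hP
  · intro p _
    exact (Set.finite_Ico _ _).prod (Set.finite_Ico _ _)

lemma SS_WC (P : Set (ℕ × ℕ)) {a b : ℤ} (hab : (a + b) % 4 ≠ 0) : WC (SS P a b) := by
  intro i j
  constructor
  · rintro ⟨p, hp, h1, h2, h3, h4⟩ ⟨q, hq, g1, g2, g3, g4⟩
    dsimp only at *
    rcases lt_or_ge (i + 1) (4 * (p.1 : ℤ) + b) with h | h
    · exact Or.inl ⟨p, hp, by dsimp only; omega⟩
    · exact Or.inr ⟨q, hq, by dsimp only; omega⟩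
  · rintro ⟨p, hp, h1, h2, h3, h4⟩ ⟨q, hq, g1, g2, g3, g4⟩
    dsimp only at *
    rcases lt_or_ge (i + 1) (4 * (q.1 : ℤ) + b) with h | h
    · exact Or.inr ⟨q, hq, by dsimp only; omega⟩
    · exact Or.inl ⟨p, hp, by dsimp only; omega⟩

lemma SS_lines (P G : Set (ℕ × ℕ)) : Lines (SS P 3 2) (SS G 4 3) := by
  constructor
  · intro i
    rcases (by omega : ((i + 1) % 4 = 0 ∨ (i + 1) % 4 = 3) ∨ ((i + 1) % 4 = 1 ∨ (i + 1) % 4 = 2))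
      with h | h
    · left; intro j
      constructor <;> rintro ⟨p, hp, h1⟩ <;> exact ⟨p, hp, by dsimp only at *; omega⟩
    · right; intro j
      constructor <;> rintro ⟨p, hp, h1⟩ <;> exact ⟨p, hp, by dsimp only at *; omega⟩
  · intro i
    rcases (by omega : ((i + 1) % 4 = 0 ∨ (i + 1) % 4 = 3) ∨ ((i + 1) % 4 = 1 ∨ (i + 1) % 4 = 2))
      with h | h
    · left; intro j
      constructor <;> rintro ⟨p, hp, h1⟩ <;> exact ⟨p, hp, by dsimp only at *; omega⟩
    · right; intro j
      constructor <;> rintro ⟨p, hp, h1⟩ <;> exact ⟨p, hp, by dsimp only at *; omega⟩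

lemma XX_SS {ξ : ℤ → ℝ} (hξ : StrictMono ξ) (P : Set (ℕ × ℕ)) {a b : ℤ} (hab : 0 < a + b)
    (z : ℝ × ℝ) : z ∈ XX ξ (SS P a b) ↔ ∃ p ∈ P,
      (ξ (4 * (p.1 : ℤ) - a) ≤ z.1 ∧ z.1 ≤ ξ (4 * (p.1 : ℤ) + b)) ∧
      (ξ (4 * (p.2 : ℤ) - a) ≤ z.2 ∧ z.2 ≤ ξ (4 * (p.2 : ℤ) + b)) := by
  constructor
  · rintro ⟨k, ⟨p, hp, h1, h2, h3, h4⟩, g1, g2, g3, g4⟩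
    exact ⟨p, hp, ⟨(hξ.monotone h1).trans g1, g2.trans (hξ.monotone (by omega))⟩,
      (hξ.monotone h3).trans g3, g4.trans (hξ.monotone (by omega))⟩
  · rintro ⟨p, hp, ⟨g1, g2⟩, g3, g4⟩
    obtain ⟨i, i1, i2, i3, i4⟩ := exists_between_lines (ξ := ξ) (δ := 0) le_rfl
      (c := 4 * (p.1 : ℤ) - a) (d := 4 * (p.1 : ℤ) + b) (w := z.1) (by omega)
      (by linarith) (by linarith)
    obtain ⟨j, j1, j2, j3, j4⟩ := exists_between_lines (ξ := ξ) (δ := 0) le_rfl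
      (c := 4 * (p.2 : ℤ) - a) (d := 4 * (p.2 : ℤ) + b) (w := z.2) (by omega)
      (by linarith) (by linarith)
    exact ⟨(i, j), ⟨p, hp, i1, i2, j1, j2⟩, by linarith, by linarith, by linarith, by linarith⟩

lemma mem_XA {ε : ℝ} (h0 : 0 < ε) (h1 : ε < 1 / 4) (P : Set (ℕ × ℕ)) (z : ℝ × ℝ) :
    z ∈ XX (lin ε) (SS P 3 2) ↔ ∃ p ∈ P,
      ((p.1 : ℝ) - 1 - ε ≤ z.1 ∧ z.1 ≤ p.1 + ε) ∧ ((p.2 : ℝ) - 1 - ε ≤ z.2 ∧ z.2 ≤ p.2 + ε) := by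
  rw [XX_SS (lin_grid h0 h1).mono P (by norm_num)]
  have e (n : ℕ) : lin ε (4 * (n : ℤ) - 3) = n - 1 - ε := by
    rw [show 4 * (n : ℤ) - 3 = 4 * ((n : ℤ) - 1) + 1 by ring, lin1]; push_cast; ring
  simp only [e, lin2, Int.cast_natCast]

lemma mem_XB {ε : ℝ} (h0 : 0 < ε) (h1 : ε < 1 / 4) (P : Set (ℕ × ℕ)) (z : ℝ × ℝ) :
    z ∈ XX (lin ε) (SS P 4 3) ↔ ∃ p ∈ P,
      ((p.1 : ℝ) - 1 - 2 * ε ≤ z.1 ∧ z.1 ≤ p.1 + 2 * ε) ∧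
      ((p.2 : ℝ) - 1 - 2 * ε ≤ z.2 ∧ z.2 ≤ p.2 + 2 * ε) := by
  rw [XX_SS (lin_grid h0 h1).mono P (by norm_num)]
  have e (n : ℕ) : lin ε (4 * (n : ℤ) - 4) = n - 1 - 2 * ε := by
    rw [show 4 * (n : ℤ) - 4 = 4 * ((n : ℤ) - 1) by ring, lin0]; push_cast; ring
  simp only [e, lin3, Int.cast_natCast]

lemma clamp1 {l u e y : ℝ} (hlu : l ≤ u) (h1 : l - e ≤ y) (h2 : y ≤ u + e) (he : 0 ≤ e) :
    ∃ x, (l ≤ x ∧ x ≤ u) ∧ |x - y| ≤ e := by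
  rcases le_total y l with h | h
  · exact ⟨l, ⟨le_rfl, hlu⟩, by rw [abs_le]; constructor <;> linarith⟩
  rcases le_total y u with h' | h'
  · exact ⟨y, ⟨h, h'⟩, by simpa using he⟩
  · exact ⟨u, ⟨hlu, le_rfl⟩, by rw [abs_le]; constructor <;> linarith⟩

lemma mem_thick_fg {e : ℝ} (he : 0 ≤ e) (P : Set (ℕ × ℕ)) (y : Plane) :
    y ∈ thick e (fg P) ↔ ∃ p ∈ P,
      ((p.1 : ℝ) - 1 - e ≤ y 0 ∧ y 0 ≤ p.1 + e) ∧ ((p.2 : ℝ) - 1 - e ≤ y 1 ∧ y 1 ≤ p.2 + e) := by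
  constructor
  · rintro ⟨x, hx, hxy⟩
    simp only [fg, mem_iUnion] at hx
    obtain ⟨p, hp, ⟨h1, h2⟩, h3, h4⟩ := hx
    rw [pi_norm_le_iff_of_nonneg he] at hxy
    have a := hxy 0
    have b := hxy 1
    rw [Pi.sub_apply, Real.norm_eq_abs, abs_le] at a b
    exact ⟨p, hp, ⟨by linarith, by linarith⟩, by linarith, by linarith⟩
  · rintro ⟨p, hp, ⟨h1, h2⟩, h3, h4⟩
    obtain ⟨u, hu, hu'⟩ := clamp1 (by linarith : (p.1 : ℝ) - 1 ≤ p.1) h1 h2 he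
    obtain ⟨v, hv, hv'⟩ := clamp1 (by linarith : (p.2 : ℝ) - 1 ≤ p.2) h3 h4 he
    refine ⟨![u, v], ?_, ?_⟩
    · simp only [fg, mem_iUnion]
      exact ⟨p, hp, hu, hv⟩
    · rw [pi_norm_le_iff_of_nonneg he]
      intro i
      fin_cases i
      · exact hu'
      · exact hv'

def tau : Plane ≃ₜ ℝ × ℝ := Homeomorph.finTwoArrow

lemma uniq_transfer {T : Set Plane} {X : Set (ℝ × ℝ)} (hT : tau '' T = X) {C : Set Plane}
    (hu : ∃! D : Set Plane, IsCompOf D T ∧ SharesEdge D C) :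
    ∀ p ∈ X, ∀ q ∈ X, (closure (connectedComponentIn X p) ∩ closure (tau '' C)).Infinite →
      (closure (connectedComponentIn X q) ∩ closure (tau '' C)).Infinite →
      connectedComponentIn X p = connectedComponentIn X q := by
  subst hT
  rintro _ ⟨p, hp, rfl⟩ _ ⟨q, hq, rfl⟩ h1 h2
  have key : ∀ r ∈ T, (closure (connectedComponentIn (tau '' T) (tau r)) ∩
      closure (tau '' C)).Infinite → SharesEdge (connectedComponentIn T r) C := by
    intro r hr h
    rw [← tau.image_connectedComponentIn hr, ← tau.image_closure, ← tau.image_closure,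
      ← image_inter tau.injective] at h
    exact h.of_image _
  have := hu.unique ⟨⟨p, hp, rfl⟩, key p hp h1⟩ ⟨⟨q, hq, rfl⟩, key q hq h2⟩
  rw [← tau.image_connectedComponentIn hp, ← tau.image_connectedComponentIn hq, this]

/-- The closure of a regular connected component of `FP` is homeomorphic
either to the closed Euclidean unit disk or to the closed annulus `{1 ≤ ‖x‖₂ ≤ 2}`. -/
theorem regular_component_closure_disk_or_annulus
    (h w : ℕ) (P G : Set (ℕ × ℕ)) (hP : OnGrid P h w) (hG : OnGrid G h w)
    (ε : ℝ) (hε0 : 0 < ε) (hε : ε < 1 / 4)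
    (C : Set Plane) (hC : IsCompOf C (FPset P G ε)) (hreg : RegularComp P G ε C) :
    Nonempty (↥(closure C) ≃ₜ ↥(Metric.closedBall (0 : EPlane) 1)) ∨
    Nonempty (↥(closure C) ≃ₜ ↥{x : EPlane | 1 ≤ ‖x‖ ∧ ‖x‖ ≤ 2}) := by
  obtain ⟨x0, hx0, rfl⟩ := hC
  have hA : tau ⁻¹' (XX (lin ε) (SS P 3 2)) = thick ε (fg P) := by
    ext y
    rw [mem_thick_fg hε0.le, mem_preimage, mem_XA hε0 hε]
    rfl
  have hB : tau ⁻¹' (XX (lin ε) (SS G 4 3)) = thick (2 * ε) (fg G) := by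
    ext y
    rw [mem_thick_fg (by linarith), mem_preimage, mem_XB hε0 hε]
    rfl
  have hFP : tau '' (FPset P G ε) = XX (lin ε) (SS P 3 2) ∩ (XX (lin ε) (SS G 4 3))ᶜ := by
    rw [FPset, ← hA, ← hB, ← preimage_compl, ← preimage_inter, image_preimage_eq _ tau.surjective]
  have hTP : tau '' (TPset P G ε) = XX (lin ε) (SS P 3 2) ∩ XX (lin ε) (SS G 4 3) := by
    rw [TPset, ← hA, ← hB, ← preimage_inter, image_preimage_eq _ tau.surjective]
  have hTN : tau '' (TNset P G ε) = (XX (lin ε) (SS P 3 2))ᶜ ∩ (XX (lin ε) (SS G 4 3))ᶜ := by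
    rw [TNset, ← hA, ← hB, ← preimage_compl, ← preimage_compl, ← preimage_inter,
      image_preimage_eq _ tau.surjective]
  obtain ⟨Θ, hΘ⟩ := stepA (lin_grid hε0 hε) (lin_cov hε0 hε) (SS_finite hP 3 2)
    (SS_WC P (by norm_num)) (SS_WC G (by norm_num)) (SS_lines P G) (x0 := tau x0)
    (by rw [← hFP]; exact mem_image_of_mem _ hx0)
    (by rw [← hFP]; exact tau.image_connectedComponentIn hx0)
    (uniq_transfer hTP hreg.1) (uniq_transfer hTN hreg.2)
  have hcl : ∀ z, tau z ∈ closure (tau '' connectedComponentIn (FPset P G ε) x0) ↔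
      z ∈ closure (connectedComponentIn (FPset P G ε) x0) := by
    intro z
    rw [← tau.image_closure, tau.injective.mem_set_image]
  rcases hΘ with h | h
  · exact Or.inl ⟨(tau.trans Θ).subtype fun z => ((h (tau z)).trans (hcl z)).symm⟩
  · exact Or.inr ⟨(tau.trans Θ).subtype fun z => ((h (tau z)).trans (hcl z)).symm⟩

end
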